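/- Let d = 3, let ν, κ > 0 satisfy κ² < ν² < (9/8) κ², and let γ ∈ (1,3). There exists δ > 0, depending only on γ, with the following property: for every sufficiently small ε > 0 (smaller than a threshold depending only on γ, ν, κ), every T > 0 and every smooth initial data (ρ⁰, u⁰) with ρ⁰ > 0, there is a constant C, depending only on ε, ν, κ, γ, T and (ρ⁰, u⁰), such that every smooth solution (ρ, u) of (QNS_ε) on [0,T] × T³ with initial data (ρ⁰, u⁰) satisfies sup_{t∈(0,T)} ∫_{T³} ρ |w|^{3+2δ} dx ≤ C, where w = u + μ ∇(φ_ε(ρ)). -/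

import Mathlib

open MeasureTheory Real

noncomputable section

/-- Partial derivative of a scalar field in the coordinate direction `i`. -/
def pd {d : ℕ} (i : Fin d) (f : (Fin d → ℝ) → ℝ) (x : Fin d → ℝ) : ℝ :=
  fderiv ℝ f x (Pi.single i 1)

/-- Gradient of a scalar field. -/
def grad {d : ℕ} (f : (Fin d → ℝ) → ℝ) (x : Fin d → ℝ) : Fin d → ℝ :=
  fun i => pd i f x

/-- Divergence of a vector field. -/
def dvg {d : ℕ} (u : (Fin d → ℝ) → (Fin d → ℝ)) (x : Fin d → ℝ) : ℝ :=
  ∑ i, pd i (fun y => u y i) x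

/-- Row-wise divergence of a matrix field: `(dvgM M x) i = ∑ j, ∂_j M_{ij}`. -/
def dvgM {d : ℕ} (M : (Fin d → ℝ) → Fin d → Fin d → ℝ) (x : Fin d → ℝ) : Fin d → ℝ :=
  fun i => ∑ j, pd j (fun y => M y i j) x

/-- Hessian of a scalar field. -/
def hess {d : ℕ} (f : (Fin d → ℝ) → ℝ) (x : Fin d → ℝ) : Fin d → Fin d → ℝ :=
  fun i j => pd i (fun y => pd j f y) x

/-- Laplacian of a scalar field. -/
def lap {d : ℕ} (f : (Fin d → ℝ) → ℝ) (x : Fin d → ℝ) : ℝ :=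
  ∑ i, pd i (fun y => pd i f y) x

/-- Jacobian matrix of a vector field: `(jac u x) i j = ∂_j u_i`. -/
def jac {d : ℕ} (u : (Fin d → ℝ) → (Fin d → ℝ)) (x : Fin d → ℝ) : Fin d → Fin d → ℝ :=
  fun i j => pd j (fun y => u y i) x

/-- Symmetric part of the gradient of a vector field, `Du = (∇u + (∇u)ᵀ)/2`. -/
def symD {d : ℕ} (u : (Fin d → ℝ) → (Fin d → ℝ)) (x : Fin d → ℝ) : Fin d → Fin d → ℝ :=
  fun i j => (jac u x i j + jac u x j i) / 2

/-- Antisymmetric part of the gradient of a vector field, `Au = (∇u − (∇u)ᵀ)/2`. -/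
def antiD {d : ℕ} (u : (Fin d → ℝ) → (Fin d → ℝ)) (x : Fin d → ℝ) : Fin d → Fin d → ℝ :=
  fun i j => (jac u x i j - jac u x j i) / 2

/-- Tensor product of two vectors: `(a ⊗ b)_{ij} = a_i b_j`. -/
def tens {d : ℕ} (a b : Fin d → ℝ) : Fin d → Fin d → ℝ := fun i j => a i * b j

/-- ℤ^d-periodicity: a function of this kind descends to the torus `T^d = ℝ^d/ℤ^d`. -/
def SpacePeriodic {d : ℕ} {E : Type*} (f : (Fin d → ℝ) → E) : Prop :=
  ∀ x : Fin d → ℝ, ∀ n : Fin d → ℤ, f (x + fun i => (n i : ℝ)) = f x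

/-- Fundamental domain of the torus `T^d = ℝ^d/ℤ^d` (with its probability Lebesgue measure). -/
def unitBox (d : ℕ) : Set (Fin d → ℝ) := Set.Icc 0 1

/-- The approximating viscosity coefficient `h_ε(r) = r + ε r^{7/8} + ε r^γ`. -/
def hfun (ε γ r : ℝ) : ℝ := r + ε * r ^ ((7 : ℝ) / 8) + ε * r ^ γ

/-- `g_ε(r) = r h_ε'(r) − h_ε(r)`. -/
def gfun (ε γ r : ℝ) : ℝ := r * deriv (hfun ε γ) r - hfun ε γ r

/-- `λ(ε) = e^{−1/ε⁴}`. -/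
def lamfun (ε : ℝ) : ℝ := Real.exp (-1 / ε ^ 4)

/-- The damping coefficient `p̃_ε(r) = λ(ε)(r^{1/ε²} + r^{−1/ε²})`. -/
def ptil (ε r : ℝ) : ℝ := lamfun ε * (r ^ (1 / ε ^ 2) + r ^ (-(1 / ε ^ 2)))

/-- `μ = ν − √(ν² − κ²)`. -/
def muof (ν κ : ℝ) : ℝ := ν - Real.sqrt (ν ^ 2 - κ ^ 2)

/-- `p_ε` is an antiderivative on `(0,∞)` of `r ↦ μ p̃_ε(r) h_ε'(r) / r`. -/
def IsPeps (ε γ ν κ : ℝ) (P : ℝ → ℝ) : Prop :=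
  ∀ r : ℝ, 0 < r → HasDerivAt P (muof ν κ * ptil ε r * deriv (hfun ε γ) r / r) r

/-- `φ_ε` is a smooth function on `(0,∞)` with `r φ_ε'(r) = h_ε'(r)`. -/
def IsPhieps (ε γ : ℝ) (Φ : ℝ → ℝ) : Prop :=
  ContDiffOn ℝ (⊤ : ℕ∞) Φ (Set.Ioi 0) ∧ ∀ r : ℝ, 0 < r → r * deriv Φ r = deriv (hfun ε γ) r

/-- `f_ε` satisfies `r f_ε'(r) − f_ε(r) = p_ε(r)` on `(0,∞)`. -/
def IsFeps (P F : ℝ → ℝ) : Prop :=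
  (∀ r : ℝ, 0 < r → DifferentiableAt ℝ F r) ∧
  ∀ r : ℝ, 0 < r → r * deriv F r - F r = P r

/-- The vector field `∇( h_ε'(ρ) div(h_ε'(ρ) ∇√ρ) / √ρ )`; the capillarity term of (QNS_ε) is
`2 κ² ρ` times this field. -/
def Kvec {d : ℕ} (ε γ : ℝ) (ρ : (Fin d → ℝ) → ℝ) (x : Fin d → ℝ) : Fin d → ℝ :=
  grad (fun y => deriv (hfun ε γ) (ρ y) *
      dvg (fun z => deriv (hfun ε γ) (ρ z) • grad (fun w => Real.sqrt (ρ w)) z) y /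
      Real.sqrt (ρ y)) x

/-- A smooth solution of the approximating system (QNS_ε) on `(0,T) × T^d`:
a pair of `C^∞` functions on `[0,T] × T^d` with `ρ > 0` everywhere, satisfying the continuity
equation and the momentum equation pointwise. -/
def IsQNSSol (d : ℕ) (ε γ ν κ T : ℝ) (P : ℝ → ℝ)
    (ρ : ℝ → (Fin d → ℝ) → ℝ) (u : ℝ → (Fin d → ℝ) → (Fin d → ℝ)) : Prop :=
  ContDiffOn ℝ (⊤ : ℕ∞) (fun p : ℝ × (Fin d → ℝ) => ρ p.1 p.2) (Set.Icc 0 T ×ˢ Set.univ) ∧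
  ContDiffOn ℝ (⊤ : ℕ∞) (fun p : ℝ × (Fin d → ℝ) => u p.1 p.2) (Set.Icc 0 T ×ˢ Set.univ) ∧
  (∀ t x, 0 < ρ t x) ∧
  (∀ t, SpacePeriodic (ρ t)) ∧
  (∀ t, SpacePeriodic (u t)) ∧
  (∀ t ∈ Set.Ioo 0 T, ∀ x : Fin d → ℝ,
    deriv (fun s => ρ s x) t + dvg (fun y => ρ t y • u t y) x = 0) ∧
  (∀ t ∈ Set.Ioo 0 T, ∀ x : Fin d → ℝ, ∀ i : Fin d,
    deriv (fun s => ρ s x * u s x i) t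
      + dvgM (fun y i' j => ρ t y * u t y i' * u t y j) x i
      + grad (fun y => ρ t y ^ γ + P (ρ t y)) x i
      + ptil ε (ρ t x) * u t x i
    = 2 * ν * dvgM (fun y i' j => hfun ε γ (ρ t y) * symD (u t) y i' j) x i
      + 2 * ν * grad (fun y => gfun ε γ (ρ t y) * dvg (u t) y) x i
      + 2 * κ ^ 2 * ρ t x * Kvec ε γ (ρ t) x i)

/-!
The estimate holds with `δ = 1 / 2`, that is, for `∫ ρ |w|⁴`. Since `κ² = μ (2ν - μ)`, the
capillarity term is exactly the viscous term created by adding `μ ∇φ(ρ)` to the velocity, and the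
effective velocity `w` satisfies a damped transport equation

  `ρ (∂ₜ w + u · ∇w) = -p̃(ρ) w + div 𝕊`,

where `𝕊` consists of the viscous stress of `w` and the pressure `ρ^γ`. Testing it with `|w|² w`
produces the stress power `𝕊 : ∇(|w|² w)`. Splitting `∇w` into its symmetric and antisymmetric
parts, and each of these into components along and across `w`, shows that the stress power without
the pressure dominates a positive definite quadratic form in `div w` and the stretching
`w · (∇w) w / |w|²`, as long as `-h / 8 ≤ g ≤ 3 h`, `d ≤ 7` and `ν² ≤ 4 κ²`. The pressure therefore
costs at most a multiple of `ρ^(2γ) |w|² / h(ρ) ≤ ρ^γ |w|² / ε`, and this is absorbed up to a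
constant by the damping `4 p̃(ρ) |w|⁴`, because `λ ρ^(2γ) ≤ p̃(ρ)` once `2γ ≤ 1 / ε²`. So `∫ ρ |w|⁴`
grows at most linearly in time, and its initial value depends only on the initial data, since
`∇φ(ρ) = (h'(ρ) / ρ) ∇ρ`.
-/

section StressPower

open Matrix

variable {ι : Type*} [Fintype ι]

theorem trace_transpose_mul_self_nonneg (A : Matrix ι ι ℝ) : 0 ≤ (Aᵀ * A).trace := by
  classical
  simpa only [conjTranspose_eq_transpose_of_trivial] using
    (posSemidef_conjTranspose_mul_self A).trace_nonneg

theorem dotProduct_mulVec_self_of_transpose_eq_neg {A : Matrix ι ι ℝ} (hA : Aᵀ = -A)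
    (n : ι → ℝ) : n ⬝ᵥ A *ᵥ n = 0 := by
  have h := dotProduct_transpose_mulVec A n n
  rw [hA, neg_mulVec, dotProduct_neg] at h
  linarith

section HyperplaneProj

variable [DecidableEq ι] {n : ι → ℝ}

/-- Orthogonal projection onto the hyperplane orthogonal to a unit vector `n`. -/
def hyperplaneProj (n : ι → ℝ) : Matrix ι ι ℝ := 1 - vecMulVec n n

omit [Fintype ι] in
theorem hyperplaneProj_transpose (n : ι → ℝ) : (hyperplaneProj n)ᵀ = hyperplaneProj n := by
  simp [hyperplaneProj, transpose_vecMulVec]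

theorem hyperplaneProj_mul_self (hn : n ⬝ᵥ n = 1) :
    hyperplaneProj n * hyperplaneProj n = hyperplaneProj n := by
  simp [hyperplaneProj, sub_mul, mul_sub, vecMulVec_mul_vecMulVec, hn]

theorem trace_mul_hyperplaneProj (B : Matrix ι ι ℝ) :
    (B * hyperplaneProj n).trace = B.trace - n ⬝ᵥ B *ᵥ n := by
  simp [hyperplaneProj, mul_sub, mul_vecMulVec, trace_vecMulVec, dotProduct_comm]

theorem trace_hyperplaneProj_conj (hn : n ⬝ᵥ n = 1) (B : Matrix ι ι ℝ) :
    (hyperplaneProj n * B * hyperplaneProj n).trace = B.trace - n ⬝ᵥ B *ᵥ n := by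
  rw [trace_mul_cycle, hyperplaneProj_mul_self hn, trace_mul_comm, trace_mul_hyperplaneProj]

theorem frobenius_hyperplaneProj_conj (hn : n ⬝ᵥ n = 1) (B : Matrix ι ι ℝ) :
    ((hyperplaneProj n * B * hyperplaneProj n)ᵀ * (hyperplaneProj n * B * hyperplaneProj n)).trace
      = (Bᵀ * B).trace - B *ᵥ n ⬝ᵥ B *ᵥ n - Bᵀ *ᵥ n ⬝ᵥ Bᵀ *ᵥ n + (n ⬝ᵥ B *ᵥ n) ^ 2 := by
  set Q := hyperplaneProj n
  have hconj : ((Q * B * Q)ᵀ * (Q * B * Q)).trace = (Bᵀ * Q * B * Q).trace := by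
    have hQ : Q * Q = Q := hyperplaneProj_mul_self hn
    rw [transpose_mul, transpose_mul, hyperplaneProj_transpose,
      show Q * (Bᵀ * Q) * (Q * B * Q) = Q * (Bᵀ * (Q * Q) * B * Q) by simp only [mul_assoc],
      trace_mul_comm, hQ, mul_assoc _ Q Q, hQ]
  have htrace : (Bᵀ * Q * B).trace = (Bᵀ * B).trace - Bᵀ *ᵥ n ⬝ᵥ Bᵀ *ᵥ n := by
    rw [trace_mul_cycle, trace_mul_hyperplaneProj, trace_mul_comm B, ← mulVec_mulVec,
      ← dotProduct_transpose_mulVec]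
  have hquad : n ⬝ᵥ (Bᵀ * Q * B) *ᵥ n = B *ᵥ n ⬝ᵥ B *ᵥ n - (n ⬝ᵥ B *ᵥ n) ^ 2 := by
    have hproj (v : ι → ℝ) : Q *ᵥ v = v - (n ⬝ᵥ v) • n := by
      simp [Q, hyperplaneProj, sub_mulVec, vecMulVec_mulVec]
    rw [mul_assoc, ← mulVec_mulVec, dotProduct_transpose_mulVec, ← mulVec_mulVec, hproj,
      sub_dotProduct, smul_dotProduct, smul_eq_mul, sq]
  rw [hconj, trace_mul_hyperplaneProj, htrace, hquad]
  ring

theorem sq_trace_hyperplaneProj_conj_le (hn : n ⬝ᵥ n = 1) (B : Matrix ι ι ℝ) :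
    (B.trace - n ⬝ᵥ B *ᵥ n) ^ 2 ≤ (Fintype.card ι - 1) *
      ((hyperplaneProj n * B * hyperplaneProj n)ᵀ *
        (hyperplaneProj n * B * hyperplaneProj n)).trace := by
  have htr := trace_hyperplaneProj_conj hn B
  set Q := hyperplaneProj n
  set C := Q * B * Q
  have hQ : Q * Q = Q := hyperplaneProj_mul_self hn
  have hQt : Qᵀ = Q := hyperplaneProj_transpose n
  have hCQ : (C * Q).trace = C.trace := by rw [mul_assoc _ Q Q, hQ]
  have hQC : (Q * C).trace = C.trace := by rw [trace_mul_comm, hCQ]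
  have htrQ : Q.trace = Fintype.card ι - 1 := by
    simp [Q, hyperplaneProj, trace_vecMulVec, hn]
  have hsq (c : ℝ) : 0 ≤ (Fintype.card ι - 1) * (c * c) + -2 * (B.trace - n ⬝ᵥ B *ᵥ n) * c
      + (Cᵀ * C).trace := by
    have hCQ' : (Cᵀ * Q).trace = C.trace := by
      rw [← hQC, ← trace_transpose (Cᵀ * Q), transpose_mul, transpose_transpose, hQt]
    calc 0 ≤ ((C - c • Q)ᵀ * (C - c • Q)).trace := trace_transpose_mul_self_nonneg _
      _ = _ := by
        simp only [transpose_sub, transpose_smul, hQt, sub_mul, mul_sub, Matrix.smul_mul,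
          Matrix.mul_smul, hQ, trace_sub, trace_smul, hCQ', hQC, htrQ, htr, smul_eq_mul]
        ring
  have := discrim_le_zero hsq
  rw [discrim] at this
  linarith

end HyperplaneProj

variable {n : ι → ℝ}

theorem sq_trace_le_of_isSymm (hn : n ⬝ᵥ n = 1) {S : Matrix ι ι ℝ} (hS : Sᵀ = S) {m : ℝ}
    (hm : Fintype.card ι ≤ m + 1) :
    (S.trace - n ⬝ᵥ S *ᵥ n) ^ 2 ≤ m *
      ((Sᵀ * S).trace - 2 * (S *ᵥ n ⬝ᵥ S *ᵥ n) + (n ⬝ᵥ S *ᵥ n) ^ 2) := by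
  classical
  calc (S.trace - n ⬝ᵥ S *ᵥ n) ^ 2
    _ ≤ m * ((hyperplaneProj n * S * hyperplaneProj n)ᵀ *
        (hyperplaneProj n * S * hyperplaneProj n)).trace :=
        (sq_trace_hyperplaneProj_conj_le hn S).trans
          (mul_le_mul_of_nonneg_right (by linarith) (trace_transpose_mul_self_nonneg _))
    _ = _ := by
        rw [frobenius_hyperplaneProj_conj hn, hS]
        ring

theorem two_mul_mulVec_sq_le_of_transpose_eq_neg (hn : n ⬝ᵥ n = 1) {A : Matrix ι ι ℝ}
    (hA : Aᵀ = -A) : 2 * (A *ᵥ n ⬝ᵥ A *ᵥ n) ≤ (Aᵀ * A).trace := by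
  classical
  have h := trace_transpose_mul_self_nonneg (hyperplaneProj n * A * hyperplaneProj n)
  rw [frobenius_hyperplaneProj_conj hn, dotProduct_mulVec_self_of_transpose_eq_neg hA, hA] at h
  rw [hA]
  simp only [neg_mulVec, neg_dotProduct_neg] at h
  linarith

theorem transversal_form_nonneg {ν μ : ℝ} (hμν : μ < 2 * ν)
    (hν : ν ^ 2 ≤ 4 * (μ * (2 * ν - μ))) (hn : n ⬝ᵥ n = 1) (y : ι → ℝ) {z : ι → ℝ}
    (hz : n ⬝ᵥ z = 0) :
    0 ≤ 4 * (2 * ν - μ) * (y ⬝ᵥ y - (n ⬝ᵥ y) ^ 2) + 4 * μ * (z ⬝ᵥ z) - 4 * ν * (y ⬝ᵥ z) := by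
  set a := 2 * ν - μ
  have ha0 : 0 < a := sub_pos.2 hμν
  have hnonneg (v : ι → ℝ) : 0 ≤ v ⬝ᵥ v := dotProduct_star_self_nonneg v
  refine nonneg_of_mul_nonneg_right ?_ ha0
  -- `y - (n ⬝ᵥ y) • n` is the component of `y` in the hyperplane containing `z`.
  calc 0 ≤ ((2 * a) • (y - (n ⬝ᵥ y) • n) - ν • z) ⬝ᵥ ((2 * a) • (y - (n ⬝ᵥ y) • n) - ν • z)
        + (4 * (μ * a) - ν ^ 2) * (z ⬝ᵥ z) :=
        add_nonneg (hnonneg _) (mul_nonneg (sub_nonneg.2 hν) (hnonneg z))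
    _ = _ := by
        simp only [sub_dotProduct, dotProduct_sub, smul_dotProduct, dotProduct_smul, smul_eq_mul,
          hn, hz, dotProduct_comm y n, dotProduct_comm z n, dotProduct_comm z y]
        ring

variable [DecidableEq ι]

/-- The viscous stress tensor of the effective velocity `w` with gradient `B i j = ∂ⱼ wᵢ`, including
the pressure `q`: its divergence is the right-hand side of the equation satisfied by `w`. -/
def viscousStress {R : Type*} [CommRing R] (ν μ h g q : R) (B : Matrix ι ι R) : Matrix ι ι R :=
  h • (ν • B + (ν - μ) • Bᵀ) + ((2 * ν - μ) * g * B.trace - q) • (1 : Matrix ι ι R)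

theorem stressPower_eq (ν μ h g q : ℝ) (n : ι → ℝ)
    {S A : Matrix ι ι ℝ} (hS : Sᵀ = S) (hA : Aᵀ = -A) :
    (((S + A) + 2 • vecMulVec n ((S + A)ᵀ *ᵥ n))ᵀ * viscousStress ν μ h g q (S + A)).trace
      = h * ((2 * ν - μ) * ((Sᵀ * S).trace + 2 * (S *ᵥ n ⬝ᵥ S *ᵥ n))
          + μ * ((Aᵀ * A).trace + 2 * (A *ᵥ n ⬝ᵥ A *ᵥ n)) - 4 * ν * (S *ᵥ n ⬝ᵥ A *ᵥ n))
        + ((2 * ν - μ) * g * S.trace - q) * (S.trace + 2 * (n ⬝ᵥ S *ᵥ n)) := by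
  have hAtr : A.trace = 0 := by
    have := trace_transpose A
    rw [hA, trace_neg] at this
    linarith
  have hSA : (S * A).trace = 0 := by
    have := trace_transpose (S * A)
    rw [transpose_mul, hS, hA, neg_mul, trace_neg, trace_mul_comm] at this
    linarith
  have hBt : (S + A)ᵀ = S - A := by rw [transpose_add, hS, hA, sub_eq_add_neg]
  have hnA : n ⬝ᵥ A *ᵥ n = 0 := dotProduct_mulVec_self_of_transpose_eq_neg hA n
  have hstress : viscousStress ν μ h g q (S + A)
      = h • ((2 * ν - μ) • S + μ • A) + ((2 * ν - μ) * g * S.trace - q) • (1 : Matrix ι ι ℝ) := by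
    rw [viscousStress, hBt, trace_add, hAtr, add_zero]
    module
  have hnormal (X : Matrix ι ι ℝ) :
      (((S + A) + 2 • vecMulVec n ((S + A)ᵀ *ᵥ n))ᵀ * X).trace
        = ((S - A) * X).trace + 2 * (Xᵀ *ᵥ n ⬝ᵥ (S - A) *ᵥ n) := by
    rw [transpose_add, transpose_smul, transpose_vecMulVec, hBt, add_mul, trace_add, smul_mul,
      trace_smul, vecMulVec_mul, trace_vecMulVec, ← mulVec_transpose, dotProduct_comm,
      nsmul_eq_mul, Nat.cast_ofNat]
  rw [hstress, hnormal]
  simp only [transpose_add, transpose_smul, transpose_one, hS, hA, mul_add, sub_mul,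
    Matrix.mul_smul, trace_add, trace_sub, trace_smul, hSA, trace_mul_comm A S, smul_eq_mul,
    add_mulVec, smul_mulVec, one_mulVec, add_dotProduct, smul_dotProduct, neg_mulVec, sub_mulVec,
    dotProduct_sub, hnA, hAtr, neg_dotProduct, neg_mul, trace_neg, mul_one,
    dotProduct_comm (A *ᵥ n) (S *ᵥ n)]
  ring

theorem stretching_form_ge {h g s t : ℝ} (hg : -h / 8 ≤ g) (hg' : g ≤ 3 * h) :
    h / 64 * (s ^ 2 + t ^ 2)
      ≤ h * (3 * s ^ 2 + t ^ 2 / 6) + g * (3 * s ^ 2 + 4 * s * t + t ^ 2) := by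
  have hcompress : 0 ≤ 167 / 64 * s ^ 2 - s * t / 2 + 5 / 192 * t ^ 2 := by
    nlinarith [sq_nonneg (10 * s - t), sq_nonneg s]
  have hexpand : 0 ≤ 767 / 64 * s ^ 2 + 12 * s * t + 605 / 192 * t ^ 2 := by
    nlinarith [sq_nonneg (2 * s + t), sq_nonneg t]
  -- The claim is affine in `g`; these are its two extreme cases `g = -h / 8` and `g = 3 * h`.
  linarith [mul_nonneg (sub_nonneg.2 hg') hcompress, mul_nonneg (sub_nonneg.2 hg) hexpand]

theorem young_trace {c : ℝ} (hc : 0 < c) (q s t : ℝ) :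
    -(160 * q ^ 2 / c) ≤ c * (1 / 64 * (s ^ 2 + t ^ 2)) - q * (3 * s + t) := by
  have hsq : c * (1 / 64 * (s ^ 2 + t ^ 2)) - q * (3 * s + t) + 160 * q ^ 2 / c
      = ((c * s - 96 * q) ^ 2 + (c * t - 32 * q) ^ 2) / (64 * c) := by
    field_simp
    ring
  have : 0 ≤ ((c * s - 96 * q) ^ 2 + (c * t - 32 * q) ^ 2) / (64 * c) := by positivity
  linarith

/-- The gradient of `|w|² w`, where `B i j = ∂ⱼ wᵢ` is the gradient of `w`. -/
def gradNormSqSmul {R : Type*} [CommRing R] (w : ι → R) (B : Matrix ι ι R) : Matrix ι ι R :=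
  (w ⬝ᵥ w) • B + 2 • vecMulVec w (Bᵀ *ᵥ w)

theorem stressPower_ge_of_unit (hι : Fintype.card ι ≤ 7) {ν μ h g : ℝ} (hμ : 0 < μ)
    (hμν : μ < 2 * ν) (hν : ν ^ 2 ≤ 4 * (μ * (2 * ν - μ))) (hh : 0 < h) (hg : -h / 8 ≤ g)
    (hg' : g ≤ 3 * h) (q : ℝ) (hn : n ⬝ᵥ n = 1) (B : Matrix ι ι ℝ) :
    -(160 * q ^ 2 / ((2 * ν - μ) * h)) ≤
      ((gradNormSqSmul n B)ᵀ * viscousStress ν μ h g q B).trace := by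
  obtain ⟨S, A, hS, hA, rfl⟩ : ∃ S A : Matrix ι ι ℝ, Sᵀ = S ∧ Aᵀ = -A ∧ B = S + A := by
    refine ⟨(1 / 2 : ℝ) • (B + Bᵀ), (1 / 2 : ℝ) • (B - Bᵀ), ?_, ?_, by module⟩
    · simp [add_comm]
    · simp [← smul_neg]
  have ha : 0 < 2 * ν - μ := sub_pos.2 hμν
  have htransversal := transversal_form_nonneg hμν hν hn (S *ᵥ n)
    (dotProduct_mulVec_self_of_transpose_eq_neg hA n)
  have htangential := sq_trace_le_of_isSymm (m := 6) hn hS (by norm_cast)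
  have hantisymm := two_mul_mulVec_sq_le_of_transpose_eq_neg hn hA
  have hstretch := stretching_form_ge (s := n ⬝ᵥ S *ᵥ n) (t := S.trace - n ⬝ᵥ S *ᵥ n) hg hg'
  have hyoung := young_trace (mul_pos ha hh) q (n ⬝ᵥ S *ᵥ n) (S.trace - n ⬝ᵥ S *ᵥ n)
  rw [gradNormSqSmul, hn, one_smul, stressPower_eq _ _ _ _ _ _ hS hA]
  linarith [mul_le_mul_of_nonneg_left htangential (mul_pos ha hh).le, mul_nonneg hh.le htransversal,
    mul_le_mul_of_nonneg_left hantisymm (mul_pos hh hμ).le,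
    mul_le_mul_of_nonneg_left hstretch ha.le]

theorem stressPower_ge (hι : Fintype.card ι ≤ 7) {ν μ h g : ℝ} (hμ : 0 < μ)
    (hμν : μ < 2 * ν) (hν : ν ^ 2 ≤ 4 * (μ * (2 * ν - μ))) (hh : 0 < h) (hg : -h / 8 ≤ g)
    (hg' : g ≤ 3 * h) (q : ℝ) (w : ι → ℝ) (B : Matrix ι ι ℝ) :
    -(160 * q ^ 2 / ((2 * ν - μ) * h)) * (w ⬝ᵥ w) ≤
      ((gradNormSqSmul w B)ᵀ * viscousStress ν μ h g q B).trace := by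
  rcases eq_or_ne w 0 with rfl | hw
  · simp [gradNormSqSmul]
  have hN : 0 < w ⬝ᵥ w := dotProduct_self_star_pos_iff.2 hw
  set s := √(w ⬝ᵥ w)
  have hs : s ^ 2 = w ⬝ᵥ w := sq_sqrt hN.le
  have hs0 : s ≠ 0 := (sqrt_pos.2 hN).ne'
  have hn : (s⁻¹ • w) ⬝ᵥ (s⁻¹ • w) = 1 := by
    rw [smul_dotProduct, dotProduct_smul, ← hs, smul_eq_mul, smul_eq_mul]
    field_simp
  have hhom : gradNormSqSmul w B = (w ⬝ᵥ w) • gradNormSqSmul (s⁻¹ • w) B := by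
    rw [gradNormSqSmul, gradNormSqSmul, hn, mulVec_smul, smul_vecMulVec, vecMulVec_smul,
      ← hs, one_smul, smul_add]
    congr 1
    match_scalars
    field_simp
  rw [hhom, transpose_smul, Matrix.smul_mul, trace_smul, smul_eq_mul, mul_comm]
  exact mul_le_mul_of_nonneg_left (stressPower_ge_of_unit hι hμ hμν hν hh hg hg' q hn B) hN.le

theorem map_stressPower {R S : Type*} [CommRing R] [CommRing S] (f : R →+* S) (ν μ h g q : R)
    (w : ι → R) (B : Matrix ι ι R) :
    f ((gradNormSqSmul w B)ᵀ * viscousStress ν μ h g q B).trace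
      = ((gradNormSqSmul (f ∘ w) (B.map f))ᵀ *
          viscousStress (f ν) (f μ) (f h) (f g) (f q) (B.map f)).trace := by
  simp [gradNormSqSmul, viscousStress, trace, mul_apply, dotProduct, mulVec, vecMulVec_apply,
    one_apply, apply_ite f, two_mul]

end StressPower

section EffectiveVelocity

open Matrix

variable {R A ι : Type*} [CommRing R] [CommRing A] [Algebra R A] [Fintype ι]
  {D : ι → Derivation R A A}

theorem transport_eq {r rt : A} {v : ι → A} (hcont : rt = -∑ j, D j (r * v j)) (f ft : A) :
    rt * f + r * ft + ∑ j, D j (r * f * v j) = r * (ft + ∑ j, v j * D j f) := by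
  have hflux : ∑ j, D j (r * f * v j) = (∑ j, D j (r * v j)) * f + r * ∑ j, v j * D j f := by
    rw [Finset.sum_mul, Finset.mul_sum, ← Finset.sum_add_distrib]
    refine Finset.sum_congr rfl fun j _ => ?_
    rw [mul_right_comm, (D j).leibniz]
    simp only [smul_eq_mul]
    ring
  rw [hflux, hcont]
  ring

theorem mul_capillary_eq_viscous (hD : ∀ i j a, D i (D j a) = D j (D i a)) {r h h' ψ : A}
    (hh : ∀ i, D i h = h' * D i r) (hψ : ∀ i, r * D i ψ = h' * D i r) (X : ι → A) (i : ι) :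
    r * (∑ j, D j ψ * D i (X j) + D i (h' * ∑ j, D j (X j)))
      = ∑ j, D j (h * D i (X j)) + D i ((r * h' - h) * ∑ j, D j (X j)) := by
  have hdiv : ∑ j, D j (h * D i (X j))
      = r * (∑ j, D j ψ * D i (X j)) + h * D i (∑ j, D j (X j)) := by
    rw [map_sum, Finset.mul_sum, Finset.mul_sum, ← Finset.sum_add_distrib]
    refine Finset.sum_congr rfl fun j _ => ?_
    rw [(D j).leibniz, hD i j, hh, smul_eq_mul, smul_eq_mul]
    linear_combination -D i (X j) * hψ j
  rw [hdiv, sub_mul, map_sub, mul_assoc r, (D i).leibniz r, (D i).leibniz h]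
  simp only [smul_eq_mul, hh]
  ring

theorem material_grad_eq (hD : ∀ i j a, D i (D j a) = D j (D i a)) {h' ψ ψt : A} {v : ι → A}
    (hψt : ψt = -∑ j, v j * D j ψ - h' * ∑ j, D j (v j)) (i : ι) :
    D i ψt + ∑ j, v j * D j (D i ψ)
      = -(∑ j, D j ψ * D i (v j) + D i (h' * ∑ j, D j (v j))) := by
  have htransport : D i (∑ j, v j * D j ψ)
      = ∑ j, v j * D j (D i ψ) + ∑ j, D j ψ * D i (v j) := by
    rw [map_sum, ← Finset.sum_add_distrib]
    refine Finset.sum_congr rfl fun j _ => ?_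
    rw [(D i).leibniz, hD i j, smul_eq_mul, smul_eq_mul]
  rw [hψt, map_sub, map_neg, htransport]
  ring

/-- The Jacobian matrix of `w` with respect to the derivations `D`, with entries `D j (w i)`. -/
def jacobian (D : ι → Derivation R A A) (w : ι → A) : Matrix ι ι A := of fun i j => D j (w i)

theorem div_viscousStress [DecidableEq ι] (D : ι → Derivation R A A) (ν μ h g q : A) (w : ι → A)
    (i : ι) :
    ∑ j, D j (viscousStress ν μ h g q (jacobian D w) i j)
      = ∑ j, D j (h * (ν * D j (w i) + (ν - μ) * D i (w j)))
        + D i ((2 * ν - μ) * g * ∑ j, D j (w j) - q) := by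
  have hentry (j : ι) : viscousStress ν μ h g q (jacobian D w) i j
      = h * (ν * D j (w i) + (ν - μ) * D i (w j))
        + if i = j then (2 * ν - μ) * g * ∑ k, D k (w k) - q else 0 := by
    simp [viscousStress, jacobian, one_apply, trace, mul_add]
  simp only [hentry, map_add, Finset.sum_add_distrib, apply_ite (D _), map_zero,
    Finset.sum_ite_eq, Finset.mem_univ, if_true]

theorem derivation_mul_of_eq_zero {D : Derivation R A A} {c : A} (hc : D c = 0) (a : A) :
    D (c * a) = c * D a := by
  rw [D.leibniz, hc, smul_zero, add_zero, smul_eq_mul]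

section EffectiveStress

variable {ν μ : A} (hν : ∀ i, D i ν = 0) (hμ : ∀ i, D i μ = 0)
include hν hμ

theorem div_shear_add_grad (hD : ∀ i j a, D i (D j a) = D j (D i a)) (h ψ : A) (v : ι → A)
    (i : ι) :
    ∑ j, D j (h * (ν * D j (v i + μ * D i ψ) + (ν - μ) * D i (v j + μ * D j ψ)))
      = ν * ∑ j, D j (h * (D j (v i) + D i (v j))) - μ * ∑ j, D j (h * D i (v j))
        + μ * (2 * ν - μ) * ∑ j, D j (h * D i (D j ψ)) := by
  simp only [Finset.mul_sum]
  rw [← Finset.sum_sub_distrib, ← Finset.sum_add_distrib]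
  refine Finset.sum_congr rfl fun j _ => ?_
  have hexpand : h * (ν * D j (v i + μ * D i ψ) + (ν - μ) * D i (v j + μ * D j ψ))
      = ν * (h * (D j (v i) + D i (v j))) - μ * (h * D i (v j))
        + (ν * (μ * (h * D i (D j ψ))) + ν * (μ * (h * D i (D j ψ)))
          - μ * (μ * (h * D i (D j ψ)))) := by
    rw [map_add, map_add, derivation_mul_of_eq_zero (hμ _), derivation_mul_of_eq_zero (hμ _),
      hD j i]
    ring
  rw [hexpand]
  simp only [map_add, map_sub, derivation_mul_of_eq_zero (hν _), derivation_mul_of_eq_zero (hμ _)]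
  ring

theorem grad_bulk_add_laplacian (g q ψ : A) (v : ι → A) (i : ι) :
    D i ((2 * ν - μ) * g * ∑ j, D j (v j + μ * D j ψ) - q)
      = (2 * ν - μ) * D i (g * ∑ j, D j (v j))
        + μ * (2 * ν - μ) * D i (g * ∑ j, D j (D j ψ)) - D i q := by
  have hdiv : ∑ j, D j (v j + μ * D j ψ) = ∑ j, D j (v j) + μ * ∑ j, D j (D j ψ) := by
    simp only [map_add, derivation_mul_of_eq_zero (hμ _), Finset.sum_add_distrib, Finset.mul_sum]
  have hexpand (Y : A) :
      (2 * ν - μ) * g * Y = ν * (g * Y) + ν * (g * Y) - μ * (g * Y) := by ring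
  rw [hdiv, hexpand, mul_add, mul_left_comm _ μ]
  simp only [map_add, map_sub, derivation_mul_of_eq_zero (hν _), derivation_mul_of_eq_zero (hμ _)]
  ring

/-- Adding `μ ∇ψ` to the velocity absorbs the capillarity into the viscous stress: by
`mul_capillary_eq_viscous` both `r ∇ψₜ` and the capillarity term are viscous, and `μ` is the root
of `κ² = μ (2ν - μ)` for which the resulting coefficients match. -/
theorem effectiveVelocity_momentum_eq [DecidableEq ι] (hD : ∀ i j a, D i (D j a) = D j (D i a))
    {r rt h h' ψ ψt p q : A} {v vt : ι → A} (hh : ∀ i, D i h = h' * D i r)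
    (hψ : ∀ i, r * D i ψ = h' * D i r) (hcont : rt = -∑ j, D j (r * v j))
    (hψt : ψt = -∑ j, v j * D j ψ - h' * ∑ j, D j (v j)) (i : ι)
    (hmom : rt * v i + r * vt i + ∑ j, D j (r * v i * v j) + (D i q + μ * p * D i ψ) + p * v i
      = ν * ∑ j, D j (h * (D j (v i) + D i (v j)))
        + 2 * ν * D i ((r * h' - h) * ∑ j, D j (v j))
        + μ * (2 * ν - μ) *
          (r * (∑ j, D j ψ * D i (D j ψ) + D i (h' * ∑ j, D j (D j ψ))))) :
    r * (vt i + μ * D i ψt + ∑ j, v j * D j (v i + μ * D i ψ))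
      = -p * (v i + μ * D i ψ) + ∑ j, D j (viscousStress ν μ h (r * h' - h) q
        (jacobian D fun i => v i + μ * D i ψ) i j) := by
  have hsplit : ∑ j, v j * D j (v i + μ * D i ψ)
      = ∑ j, v j * D j (v i) + μ * ∑ j, v j * D j (D i ψ) := by
    rw [Finset.mul_sum, ← Finset.sum_add_distrib]
    refine Finset.sum_congr rfl fun j _ => ?_
    rw [map_add, derivation_mul_of_eq_zero (hμ j)]
    ring
  rw [mul_capillary_eq_viscous hD hh hψ, transport_eq hcont] at hmom
  rw [div_viscousStress, div_shear_add_grad hν hμ hD, grad_bulk_add_laplacian hν hμ, hsplit]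
  linear_combination hmom + μ * r * material_grad_eq hD hψt i
    - μ * mul_capillary_eq_viscous hD hh hψ v i

end EffectiveStress

theorem derivation_normSq (D : Derivation R A A) (w : ι → A) :
    D (w ⬝ᵥ w) = 2 * ∑ i, w i * D (w i) := by
  simp only [dotProduct, map_sum, D.leibniz, smul_eq_mul, ← two_mul, Finset.mul_sum]

theorem derivation_normSq_smul (D : ι → Derivation R A A) (w : ι → A) (i j : ι) :
    D j ((w ⬝ᵥ w) * w i) = gradNormSqSmul w (jacobian D w) i j := by
  rw [(D j).leibniz, derivation_normSq]
  simp only [gradNormSqSmul, jacobian, Matrix.add_apply, Matrix.smul_apply, of_apply,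
    vecMulVec_apply, mulVec, dotProduct, transpose_apply, smul_eq_mul, nsmul_eq_mul, Nat.cast_ofNat,
    mul_comm (D j _)]
  ring

theorem derivation_normSq_sq (D : Derivation R A A) (w : ι → A) :
    D ((w ⬝ᵥ w) ^ 2) = 4 * (w ⬝ᵥ w) * ∑ i, w i * D (w i) := by
  rw [sq, D.leibniz, derivation_normSq, smul_eq_mul]
  ring

theorem div_normSq_smul_stress (D : ι → Derivation R A A) (w : ι → A) (S : Matrix ι ι A) :
    ∑ j, D j ((w ⬝ᵥ w) * ∑ i, w i * S i j)
      = (w ⬝ᵥ w) * ∑ i, w i * ∑ j, D j (S i j)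
        + ((gradNormSqSmul w (jacobian D w))ᵀ * S).trace := by
  simp only [trace, diag_apply, mul_apply, transpose_apply, ← derivation_normSq_smul,
    Finset.mul_sum]
  rw [Finset.sum_comm, ← Finset.sum_add_distrib]
  refine Finset.sum_congr rfl fun j _ => ?_
  rw [map_sum, ← Finset.sum_add_distrib]
  refine Finset.sum_congr rfl fun i _ => ?_
  rw [← mul_assoc, (D j).leibniz, smul_eq_mul, smul_eq_mul]
  ring

theorem energy_balance {r rt p : A} {v w wt : ι → A} {S : Matrix ι ι A}
    (hcont : rt = -∑ j, D j (r * v j))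
    (hw : ∀ i, r * (wt i + ∑ j, v j * D j (w i)) = -p * w i + ∑ j, D j (S i j)) :
    rt * (w ⬝ᵥ w) ^ 2 + r * (4 * (w ⬝ᵥ w) * (w ⬝ᵥ wt))
      = ∑ j, D j (4 * ((w ⬝ᵥ w) * ∑ i, w i * S i j) - r * (w ⬝ᵥ w) ^ 2 * v j)
        - 4 * p * (w ⬝ᵥ w) ^ 2
        - 4 * ((gradNormSqSmul w (jacobian D w))ᵀ * S).trace := by
  have hconv : ∑ j, v j * D j ((w ⬝ᵥ w) ^ 2)
      = 4 * (w ⬝ᵥ w) * ∑ i, w i * ∑ j, v j * D j (w i) := by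
    simp only [derivation_normSq_sq, Finset.mul_sum]
    rw [Finset.sum_comm]
    exact Finset.sum_congr rfl fun i _ => Finset.sum_congr rfl fun j _ => by ring
  have hmaterial : r * (w ⬝ᵥ wt + ∑ i, w i * ∑ j, v j * D j (w i))
      = -p * (w ⬝ᵥ w) + ∑ i, w i * ∑ j, D j (S i j) := by
    simp only [dotProduct]
    rw [← Finset.sum_add_distrib, Finset.mul_sum, Finset.mul_sum, ← Finset.sum_add_distrib]
    exact Finset.sum_congr rfl fun i _ => by linear_combination w i * hw i
  have hfour (j : ι) (a : A) : D j (4 * a) = 4 * D j a := by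
    simpa only [nsmul_eq_mul, Nat.cast_ofNat] using map_nsmul (D j) 4 a
  have htransport := transport_eq hcont ((w ⬝ᵥ w) ^ 2) (4 * (w ⬝ᵥ w) * (w ⬝ᵥ wt))
  simp only [map_sub, hfour, Finset.sum_sub_distrib, ← Finset.mul_sum]
  linear_combination htransport + r * hconv + 4 * (w ⬝ᵥ w) * hmaterial
    - 4 * div_normSq_smul_stress D w S

theorem four_mul_div_grad_sqrt {h' s ψ : A} (hs : ∀ j, 2 * (h' * D j s) = s * D j ψ) :
    4 * (h' * ∑ j, D j (h' * D j s))
      = s * (∑ j, D j ψ ^ 2 + 2 * (h' * ∑ j, D j (D j ψ))) := by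
  have hdiv (j : ι) : 2 * D j (h' * D j s) = D j s * D j ψ + s * D j (D j ψ) := by
    rw [two_mul, ← map_add, ← two_mul, hs, (D j).leibniz, smul_eq_mul, smul_eq_mul]
    ring
  have hterm (j : ι) : 4 * (h' * D j (h' * D j s))
      = s * (D j ψ ^ 2 + 2 * (h' * D j (D j ψ))) := by
    linear_combination 2 * h' * hdiv j + D j ψ * hs j
  simp only [Finset.mul_sum, ← Finset.sum_add_distrib, hterm]

theorem derivation_capillary_potential (ψ a : A) (i : ι) :
    D i (∑ j, D j ψ ^ 2 + 2 * a) = 2 * (∑ j, D j ψ * D i (D j ψ) + D i a) := by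
  simp only [sq, two_mul, map_add, map_sum, (D i).leibniz, smul_eq_mul, Finset.sum_add_distrib]
  ring

theorem mul_transport_potential_eq {r rt h' ψ : A} {v : ι → A}
    (hcont : rt = -∑ j, D j (r * v j)) (hψ : ∀ i, r * D i ψ = h' * D i r) :
    r * (-∑ j, v j * D j ψ - h' * ∑ j, D j (v j)) = h' * rt := by
  have hterm (j : ι) : h' * D j (r * v j) = r * (v j * D j ψ) + r * (h' * D j (v j)) := by
    rw [(D j).leibniz, smul_eq_mul, smul_eq_mul]
    linear_combination -v j * hψ j
  rw [hcont, mul_neg, Finset.mul_sum Finset.univ (fun j => D j (r * v j)),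
    Finset.sum_congr rfl fun j _ => hterm j, Finset.sum_add_distrib, ← Finset.mul_sum,
    ← Finset.mul_sum, ← Finset.mul_sum]
  ring

end EffectiveVelocity

section SmoothPeriodic

open scoped ContDiff Matrix

variable {d : ℕ}

theorem contDiff_pd {f : (Fin d → ℝ) → ℝ} (hf : ContDiff ℝ ∞ f) (i : Fin d) :
    ContDiff ℝ ∞ (pd i f) :=
  (hf.fderiv_right (m := ∞) le_rfl).clm_apply contDiff_const

theorem spacePeriodic_pd {f : (Fin d → ℝ) → ℝ} (hf : SpacePeriodic f) (i : Fin d) :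
    SpacePeriodic (pd i f) := by
  intro x n
  have hshift : (fun y => f (y + fun i => (n i : ℝ))) = f := funext fun y => hf y n
  unfold pd
  rw [← fderiv_comp_add_right, hshift]

theorem pd_comp {G : ℝ → ℝ} {G' : ℝ} {f : (Fin d → ℝ) → ℝ} {x : Fin d → ℝ}
    (hG : HasDerivAt G G' (f x)) (hf : DifferentiableAt ℝ f x) (i : Fin d) :
    pd i (fun y => G (f y)) x = G' * pd i f x := by
  have hcomp : fderiv ℝ (fun y => G (f y)) x = G' • fderiv ℝ f x :=
    (hG.comp_hasFDerivAt x hf.hasFDerivAt).fderiv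
  rw [pd, hcomp]
  rfl

theorem fderiv_fderiv_apply_comm {E : Type*} [NormedAddCommGroup E] [NormedSpace ℝ E]
    {f : E → ℝ} {x : E} (hf : ContDiffAt ℝ ∞ f x) (a b : E) :
    fderiv ℝ (fun y => fderiv ℝ f y a) x b = fderiv ℝ (fun y => fderiv ℝ f y b) x a := by
  have hdiff : DifferentiableAt ℝ (fderiv ℝ f) x :=
    (hf.fderiv_right (m := ∞) le_rfl).differentiableAt (by simp)
  have hsymm : IsSymmSndFDerivAt ℝ f x := hf.isSymmSndFDerivAt <| by
    rw [minSmoothness_of_isRCLikeNormedField]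
    exact WithTop.coe_le_coe.2 le_top
  rw [fderiv_clm_apply hdiff (differentiableAt_const a),
    fderiv_clm_apply hdiff (differentiableAt_const b)]
  simpa using hsymm.eq b a

/-- The algebra of smooth `ℤᵈ`-periodic functions, standing for the smooth functions on `𝕋ᵈ`. -/
def smoothPeriodic (d : ℕ) : Subalgebra ℝ ((Fin d → ℝ) → ℝ) where
  carrier := {f | ContDiff ℝ ∞ f ∧ SpacePeriodic f}
  mul_mem' hf hg := ⟨hf.1.mul hg.1, fun x n => congrArg₂ (· * ·) (hf.2 x n) (hg.2 x n)⟩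
  add_mem' hf hg := ⟨hf.1.add hg.1, fun x n => congrArg₂ (· + ·) (hf.2 x n) (hg.2 x n)⟩
  algebraMap_mem' _ := ⟨contDiff_const, fun _ _ => rfl⟩

namespace smoothPeriodic

instance : CoeFun (smoothPeriodic d) fun _ => (Fin d → ℝ) → ℝ := ⟨Subtype.val⟩

@[ext]
theorem ext {f g : smoothPeriodic d} (h : ∀ x, f x = g x) : f = g := Subtype.ext (funext h)

theorem differentiableAt (f : smoothPeriodic d) (x : Fin d → ℝ) : DifferentiableAt ℝ f x :=
  f.2.1.differentiable (by simp) x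

/-- Evaluation at a point, as an algebra homomorphism. -/
def eval (x : Fin d → ℝ) : smoothPeriodic d →ₐ[ℝ] ℝ :=
  (Pi.evalAlgHom ℝ _ x).comp (smoothPeriodic d).val

theorem sum_apply {ι : Type*} (s : Finset ι) (f : ι → smoothPeriodic d) (x : Fin d → ℝ) :
    (∑ i ∈ s, f i) x = ∑ i ∈ s, f i x :=
  map_sum (eval x) f s

theorem dotProduct_apply {ι : Type*} [Fintype ι] (v w : ι → smoothPeriodic d) (x : Fin d → ℝ) :
    (v ⬝ᵥ w) x = (fun i => v i x) ⬝ᵥ fun i => w i x :=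
  sum_apply _ _ x

/-- The partial derivative in the coordinate direction `i`, as a derivation. -/
def partialDeriv (i : Fin d) : Derivation ℝ (smoothPeriodic d) (smoothPeriodic d) :=
  .mk'
    { toFun f := ⟨pd i f, contDiff_pd f.2.1 i, spacePeriodic_pd f.2.2 i⟩
      map_add' f g := ext fun x => congrArg (fun L : (Fin d → ℝ) →L[ℝ] ℝ => L (Pi.single i 1))
        (fderiv_add (differentiableAt f x) (differentiableAt g x))
      map_smul' c f := ext fun x => congrArg (fun L : (Fin d → ℝ) →L[ℝ] ℝ => L (Pi.single i 1))
        (fderiv_const_smul (differentiableAt f x) c) }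
    fun f g => ext fun x => congrArg (fun L : (Fin d → ℝ) →L[ℝ] ℝ => L (Pi.single i 1))
      (fderiv_mul (differentiableAt f x) (differentiableAt g x))

theorem partialDeriv_apply (i : Fin d) (f : smoothPeriodic d) (x : Fin d → ℝ) :
    partialDeriv i f x = pd i f x := rfl

theorem sum_partialDeriv_apply (V : Fin d → smoothPeriodic d) (x : Fin d → ℝ) :
    (∑ j, partialDeriv j (V j)) x = ∑ j, pd j (V j) x :=
  sum_apply _ _ x

theorem partialDeriv_comm (i j : Fin d) (f : smoothPeriodic d) :
    partialDeriv i (partialDeriv j f) = partialDeriv j (partialDeriv i f) :=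
  ext fun _ => fderiv_fderiv_apply_comm f.2.1.contDiffAt _ _

theorem exists_eq_comp {G : ℝ → ℝ} (hG : ContDiffOn ℝ ∞ G (Set.Ioi 0)) {r : smoothPeriodic d}
    (hr : ∀ x, 0 < r x) : ∃ f : smoothPeriodic d, ∀ x, f x = G (r x) :=
  ⟨⟨fun x => G (r x), contDiff_iff_contDiffAt.2 fun x =>
      (hG.contDiffAt (Ioi_mem_nhds (hr x))).comp x r.2.1.contDiffAt,
    fun x n => congrArg G (r.2.2 x n)⟩, fun _ => rfl⟩

theorem partialDeriv_eq_of_comp {f r : smoothPeriodic d} {G : ℝ → ℝ} (hf : ∀ x, f x = G (r x))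
    {x : Fin d → ℝ} {G' : ℝ} (hG : HasDerivAt G G' (r x)) (i : Fin d) :
    partialDeriv i f x = G' * partialDeriv i r x := by
  rw [partialDeriv_apply, funext hf, pd_comp hG (differentiableAt r x), partialDeriv_apply]

theorem integral_sum_partialDeriv (V : Fin d → smoothPeriodic d) :
    ∫ x in unitBox d, (∑ j, partialDeriv j (V j)) x = 0 := by
  simp only [sum_partialDeriv_apply]
  cases d with
  | zero => simp
  | succ n =>
    have hcont : Continuous fun x => ∑ j, pd j (V j) x :=
      continuous_finsetSum _ fun j _ => (contDiff_pd (V j).2.1 j).continuous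
    have hdiv := integral_divergence_of_hasFDerivAt_off_countable' (a := 0) (b := 1)
      zero_le_one (fun i => V i) (fun i => fderiv ℝ (V i)) ∅ Set.countable_empty
      (fun i => (V i).2.1.continuous.continuousOn)
      (fun x _ i => (differentiableAt (V i) x).hasFDerivAt)
      (hcont.continuousOn.integrableOn_compact isCompact_Icc)
    refine hdiv.trans (Finset.sum_eq_zero fun i _ => sub_eq_zero.2 ?_)
    congr 1 with x
    have hface : i.insertNth ((1 : Fin (n + 1) → ℝ) i) x
        = i.insertNth ((0 : Fin (n + 1) → ℝ) i) x
          + fun k => ((Pi.single i 1 : Fin (n + 1) → ℤ) k : ℝ) := by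
      funext k
      refine Fin.succAboveCases i ?_ (fun k => ?_) k <;> simp
    rw [hface, (V i).2.2]

end smoothPeriodic

end SmoothPeriodic

section ParametricIntegral

variable {X : Type*} [TopologicalSpace X] [MeasurableSpace X] [OpensMeasurableSpace X]
  {m : Measure X} [IsFiniteMeasureOnCompacts m] {K : Set X}

theorem continuousOn_setIntegral_of_isCompact (hK : IsCompact K) (hKm : MeasurableSet K)
    {J : Set ℝ} (hJ : IsCompact J) {F : ℝ → X → ℝ}
    (hF : ContinuousOn (fun p : ℝ × X => F p.1 p.2) (J ×ˢ K)) :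
    ContinuousOn (fun t => ∫ x in K, F t x ∂m) J := by
  obtain ⟨M, hM⟩ := (hJ.prod hK).exists_bound_of_continuousOn hF
  refine continuousOn_of_dominated (bound := fun _ => M) (fun t ht => ?_) (fun t ht => ?_)
    (integrableOn_const hK.measure_lt_top.ne) ?_
  · exact (hF.comp (f := fun x => (t, x)) (by fun_prop)
      fun x hx => ⟨ht, hx⟩).aestronglyMeasurable_of_isCompact hK hKm
  · exact ae_restrict_of_forall_mem hKm fun x hx => hM (t, x) ⟨ht, hx⟩
  · exact ae_restrict_of_forall_mem hKm fun x hx =>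
      hF.comp (f := fun t => (t, x)) (by fun_prop) fun t ht => ⟨ht, hx⟩

theorem hasDerivAt_setIntegral_of_isCompact (hK : IsCompact K) (hKm : MeasurableSet K)
    {I : Set ℝ} (hI : IsOpen I) {F F' : ℝ → X → ℝ} (hF : ∀ t ∈ I, ContinuousOn (F t) K)
    (hF' : ContinuousOn (fun p : ℝ × X => F' p.1 p.2) (I ×ˢ K))
    (hderiv : ∀ t ∈ I, ∀ x ∈ K, HasDerivAt (fun s => F s x) (F' t x) t) {t : ℝ} (ht : t ∈ I) :
    HasDerivAt (fun s => ∫ x in K, F s x ∂m) (∫ x in K, F' t x ∂m) t := by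
  obtain ⟨J, hJ, htJ, hJI⟩ := exists_compact_subset hI ht
  obtain ⟨M, hM⟩ := (hJ.prod hK).exists_bound_of_continuousOn
    (hF'.mono (Set.prod_mono hJI subset_rfl))
  refine (hasDerivAt_integral_of_dominated_loc_of_deriv_le (bound := fun _ => M)
    (mem_interior_iff_mem_nhds.1 htJ) ?_ ?_ ?_ ?_ (integrableOn_const hK.measure_lt_top.ne) ?_).2
  · filter_upwards [hI.mem_nhds ht] with s hs
    exact (hF s hs).aestronglyMeasurable_of_isCompact hK hKm
  · exact (hF t ht).integrableOn_compact' hK hKm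
  · exact (hF'.comp (f := fun x => (t, x)) (by fun_prop)
      fun x hx => ⟨ht, hx⟩).aestronglyMeasurable_of_isCompact hK hKm
  · exact ae_restrict_of_forall_mem hKm fun x hx s hs => hM (s, x) ⟨hs, hx⟩
  · exact ae_restrict_of_forall_mem hKm fun x hx s hs => hderiv s (hJI hs) x hx

theorem setIntegral_le_add_mul_of_setIntegral_deriv_le (hK : IsCompact K) (hKm : MeasurableSet K)
    {a b C : ℝ} {F F' : ℝ → X → ℝ}
    (hF : ContinuousOn (fun p : ℝ × X => F p.1 p.2) (Set.Icc a b ×ˢ K))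
    (hF' : ContinuousOn (fun p : ℝ × X => F' p.1 p.2) (Set.Ioo a b ×ˢ K))
    (hderiv : ∀ t ∈ Set.Ioo a b, ∀ x ∈ K, HasDerivAt (fun s => F s x) (F' t x) t)
    (hC : ∀ t ∈ Set.Ioo a b, ∫ x in K, F' t x ∂m ≤ C) {t : ℝ} (ht : t ∈ Set.Icc a b) :
    ∫ x in K, F t x ∂m ≤ ∫ x in K, F a x ∂m + C * (t - a) := by
  have hintegral (s) (hs : s ∈ Set.Ioo a b) :=
    hasDerivAt_setIntegral_of_isCompact (m := m) (F := F) hK hKm isOpen_Ioo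
      (fun s hs => hF.comp (f := fun x => (s, x)) (by fun_prop)
        fun x hx => ⟨Set.Ioo_subset_Icc_self hs, hx⟩) hF' hderiv hs
  have hgrowth := (convex_Icc a b).image_sub_le_mul_sub_of_deriv_le
    (continuousOn_setIntegral_of_isCompact (m := m) hK hKm isCompact_Icc hF)
    (fun s hs => (hintegral s (interior_Icc.subset hs)).differentiableAt.differentiableWithinAt)
    (fun s hs => (hintegral s (interior_Icc.subset hs)).deriv.trans_le
      (hC s (interior_Icc.subset hs)))
    a ⟨le_rfl, ht.1.trans ht.2⟩ t ht ht.1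
  linarith

end ParametricIntegral

section TimeSlices

open scoped ContDiff

variable {d : ℕ} {I : Set ℝ} {t : ℝ} {f : ℝ → (Fin d → ℝ) → ℝ}

theorem contDiff_slice (hf : ContDiffOn ℝ ∞ (fun p : ℝ × (Fin d → ℝ) => f p.1 p.2) (I ×ˢ Set.univ))
    (ht : t ∈ I) : ContDiff ℝ ∞ (f t) :=
  contDiffOn_univ.1 <| hf.comp (contDiff_prodMk_right t).contDiffOn fun _ _ => ⟨ht, trivial⟩

theorem contDiffOn_pd_slice (hI : UniqueDiffOn ℝ I)
    (hf : ContDiffOn ℝ ∞ (fun p : ℝ × (Fin d → ℝ) => f p.1 p.2) (I ×ˢ Set.univ)) (i : Fin d) :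
    ContDiffOn ℝ ∞ (fun p : ℝ × (Fin d → ℝ) => pd i (f p.1) p.2) (I ×ˢ Set.univ) := by
  refine ((hf.fderivWithin (hI.prod uniqueDiffOn_univ) (m := ∞) le_rfl).clm_apply
    (contDiffOn_const (c := ((0 : ℝ), Pi.single i (1 : ℝ))))).congr ?_
  rintro ⟨t, x⟩ htx
  have hslice : HasFDerivAt (f t) _ x := hasFDerivWithinAt_univ.1 <|
    (hf.differentiableOn (by simp) (t, x) htx).hasFDerivWithinAt.comp x
      (hasFDerivAt_prodMk_right (𝕜 := ℝ) t x).hasFDerivWithinAt fun _ _ => ⟨htx.1, trivial⟩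
  rw [pd, hslice.fderiv]
  simp

theorem hasDerivAt_slice {x : Fin d → ℝ}
    (hf : DifferentiableAt ℝ (fun p : ℝ × (Fin d → ℝ) => f p.1 p.2) (t, x)) :
    HasDerivAt (fun s => f s x) (fderiv ℝ (fun p : ℝ × (Fin d → ℝ) => f p.1 p.2) (t, x) (1, 0)) t :=
  hf.hasFDerivAt.comp_hasDerivAt (f := fun s => (s, x)) t
    ((hasDerivAt_id t).prodMk (hasDerivAt_const t x))

theorem pd_slice {x : Fin d → ℝ}
    (hf : DifferentiableAt ℝ (fun p : ℝ × (Fin d → ℝ) => f p.1 p.2) (t, x)) (i : Fin d) :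
    pd i (f t) x = fderiv ℝ (fun p : ℝ × (Fin d → ℝ) => f p.1 p.2) (t, x) (0, Pi.single i 1) := by
  have hslice : HasFDerivAt (f t) _ x :=
    hf.hasFDerivAt.comp x (hasFDerivAt_prodMk_right (𝕜 := ℝ) t x)
  rw [pd, hslice.fderiv]
  simp

theorem contDiffOn_deriv_slice (hI : IsOpen I)
    (hf : ContDiffOn ℝ ∞ (fun p : ℝ × (Fin d → ℝ) => f p.1 p.2) (I ×ˢ Set.univ)) :
    ContDiffOn ℝ ∞ (fun p : ℝ × (Fin d → ℝ) => deriv (fun s => f s p.2) p.1) (I ×ˢ Set.univ) := by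
  have hopen : IsOpen (I ×ˢ (Set.univ : Set (Fin d → ℝ))) := hI.prod isOpen_univ
  exact ((hf.fderiv_of_isOpen hopen (m := ∞) le_rfl).clm_apply contDiffOn_const).congr
    fun p hp => (hasDerivAt_slice
      ((hf.contDiffAt (hopen.mem_nhds hp)).differentiableAt (by simp))).deriv

theorem hasDerivAt_deriv_slice (hI : IsOpen I)
    (hf : ContDiffOn ℝ ∞ (fun p : ℝ × (Fin d → ℝ) => f p.1 p.2) (I ×ˢ Set.univ)) (ht : t ∈ I)
    (x : Fin d → ℝ) : HasDerivAt (fun s => f s x) (deriv (fun s => f s x) t) t :=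
  (hasDerivAt_slice ((hf.contDiffAt ((hI.prod isOpen_univ).mem_nhds ⟨ht, trivial⟩)).differentiableAt
    (by simp))).differentiableAt.hasDerivAt

theorem hasDerivAt_pd_slice (hI : IsOpen I)
    (hf : ContDiffOn ℝ ∞ (fun p : ℝ × (Fin d → ℝ) => f p.1 p.2) (I ×ˢ Set.univ)) (ht : t ∈ I)
    (x : Fin d → ℝ) (i : Fin d) :
    HasDerivAt (fun s => pd i (f s) x) (pd i (fun y => deriv (fun s => f s y) t) x) t := by
  set F : ℝ × (Fin d → ℝ) → ℝ := fun p => f p.1 p.2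
  have hopen : IsOpen (I ×ˢ (Set.univ : Set (Fin d → ℝ))) := hI.prod isOpen_univ
  have hsmooth {s : ℝ} (hs : s ∈ I) (y : Fin d → ℝ) : ContDiffAt ℝ ∞ F (s, y) :=
    hf.contDiffAt (hopen.mem_nhds ⟨hs, trivial⟩)
  have hdiff {s : ℝ} (hs : s ∈ I) (y : Fin d → ℝ) : DifferentiableAt ℝ F (s, y) :=
    (hsmooth hs y).differentiableAt (by simp)
  have hdiff' (v : ℝ × (Fin d → ℝ)) : DifferentiableAt ℝ (fun p => fderiv ℝ F p v) (t, x) :=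
    (((hsmooth ht x).fderiv_right (m := ∞) le_rfl).clm_apply contDiffAt_const).differentiableAt
      (by simp)
  have hmixed : pd i (fun y => deriv (fun s => f s y) t) x
      = fderiv ℝ (fun p => fderiv ℝ F p (0, Pi.single i 1)) (t, x) (1, 0) := by
    simp only [fun y => (hasDerivAt_slice (hdiff ht y)).deriv]
    rw [fderiv_fderiv_apply_comm (hsmooth ht x), pd_slice
      (f := fun s y => fderiv ℝ F (s, y) (1, 0)) (hdiff' _)]
  rw [hmixed]
  refine (hasDerivAt_slice (f := fun s y => fderiv ℝ F (s, y) (0, Pi.single i 1))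
    (hdiff' _)).congr_of_eventuallyEq ?_
  filter_upwards [hI.mem_nhds ht] with s hs
  exact pd_slice (hdiff hs x) i

theorem setIntegral_le_add_mul_of_contDiffOn {K : Set (Fin d → ℝ)} (hK : IsCompact K)
    (hKm : MeasurableSet K) {a b C : ℝ}
    (hf : ContDiffOn ℝ ∞ (fun p : ℝ × (Fin d → ℝ) => f p.1 p.2) (Set.Icc a b ×ˢ Set.univ))
    (hC : ∀ t ∈ Set.Ioo a b, ∫ x in K, deriv (fun s => f s x) t ≤ C) (ht : t ∈ Set.Icc a b) :
    ∫ x in K, f t x ≤ (∫ x in K, f a x) + C * (t - a) := by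
  have hf_Ioo := hf.mono (Set.prod_mono_left Set.Ioo_subset_Icc_self)
  have hKuniv {J : Set ℝ} : J ×ˢ K ⊆ J ×ˢ Set.univ := Set.prod_mono_right (Set.subset_univ K)
  exact setIntegral_le_add_mul_of_setIntegral_deriv_le hK hKm (hf.continuousOn.mono hKuniv)
    ((contDiffOn_deriv_slice isOpen_Ioo hf_Ioo).continuousOn.mono hKuniv)
    (fun _ hs x _ => hasDerivAt_deriv_slice isOpen_Ioo hf_Ioo hs x) hC ht

theorem exists_eq_slice
    (hf : ContDiffOn ℝ ∞ (fun p : ℝ × (Fin d → ℝ) => f p.1 p.2) (I ×ˢ Set.univ))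
    (hper : ∀ s, SpacePeriodic (f s)) (ht : t ∈ I) :
    ∃ F : smoothPeriodic d, ∀ x, F x = f t x :=
  ⟨⟨f t, contDiff_slice hf ht, hper t⟩, fun _ => rfl⟩

theorem exists_hasDerivAt_slice (hI : IsOpen I)
    (hf : ContDiffOn ℝ ∞ (fun p : ℝ × (Fin d → ℝ) => f p.1 p.2) (I ×ˢ Set.univ))
    (hper : ∀ s, SpacePeriodic (f s)) (ht : t ∈ I) :
    ∃ F : smoothPeriodic d, ∀ x, HasDerivAt (fun s => f s x) (F x) t :=
  ⟨⟨fun x => deriv (fun s => f s x) t,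
    contDiff_slice (f := fun s x => deriv (fun s => f s x) s) (contDiffOn_deriv_slice hI hf) ht,
    fun x n => by simp only [hper _ x n]⟩, hasDerivAt_deriv_slice hI hf ht⟩

end TimeSlices

section Coefficients

open scoped ContDiff

theorem contDiffOn_rpow (c : ℝ) : ContDiffOn ℝ ∞ (fun r : ℝ => r ^ c) (Set.Ioi 0) :=
  fun _ hr => (contDiffAt_rpow_const_of_ne (ne_of_gt hr)).contDiffWithinAt

theorem contDiffOn_hfun (ε γ : ℝ) : ContDiffOn ℝ ∞ (hfun ε γ) (Set.Ioi 0) :=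
  (contDiffOn_id.add (contDiffOn_const.mul (contDiffOn_rpow _))).add
    (contDiffOn_const.mul (contDiffOn_rpow _))

theorem contDiffOn_deriv_hfun (ε γ : ℝ) : ContDiffOn ℝ ∞ (deriv (hfun ε γ)) (Set.Ioi 0) :=
  (contDiffOn_hfun ε γ).deriv_of_isOpen isOpen_Ioi le_rfl

theorem contDiffOn_ptil (ε : ℝ) : ContDiffOn ℝ ∞ (ptil ε) (Set.Ioi 0) :=
  contDiffOn_const.mul ((contDiffOn_rpow _).add (contDiffOn_rpow _))

theorem hasDerivAt_of_contDiffOn_Ioi {G : ℝ → ℝ} (hG : ContDiffOn ℝ ∞ G (Set.Ioi 0)) {r : ℝ}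
    (hr : 0 < r) : HasDerivAt G (deriv G r) r :=
  ((hG.contDiffAt (Ioi_mem_nhds hr)).differentiableAt (by simp)).hasDerivAt

variable {ε γ r : ℝ}

theorem hfun_pos (hε : 0 < ε) (hr : 0 < r) : 0 < hfun ε γ r := by
  unfold hfun
  positivity

theorem gfun_eq (ε γ : ℝ) (hr : 0 < r) :
    gfun ε γ r = -(ε / 8) * r ^ ((7 : ℝ) / 8) + ε * (γ - 1) * r ^ γ := by
  have hderiv : HasDerivAt (hfun ε γ)
      (1 + ε * (7 / 8 * r ^ ((7 : ℝ) / 8 - 1)) + ε * (γ * r ^ (γ - 1))) r :=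
    ((hasDerivAt_id r).add ((hasDerivAt_rpow_const (Or.inl hr.ne')).const_mul ε)).add
      ((hasDerivAt_rpow_const (Or.inl hr.ne')).const_mul ε)
  rw [gfun, hderiv.deriv, rpow_sub_one hr.ne', rpow_sub_one hr.ne', hfun]
  field_simp
  ring

theorem neg_hfun_div_eight_le_gfun (hε : 0 ≤ ε) (hγ : 7 / 8 ≤ γ) (hr : 0 < r) :
    -hfun ε γ r / 8 ≤ gfun ε γ r := by
  have hpow : 0 ≤ ε * r ^ γ := by positivity
  rw [gfun_eq ε γ hr, hfun]
  nlinarith [mul_nonneg hpow (sub_nonneg.2 hγ)]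

theorem gfun_le_three_mul_hfun (hε : 0 ≤ ε) (hγ : γ ≤ 4) (hr : 0 < r) :
    gfun ε γ r ≤ 3 * hfun ε γ r := by
  have hpow : 0 ≤ ε * r ^ γ := by positivity
  have hpow' : 0 ≤ ε * r ^ ((7 : ℝ) / 8) := by positivity
  rw [gfun_eq ε γ hr, hfun]
  nlinarith [mul_nonneg hpow (sub_nonneg.2 hγ)]

theorem lamfun_pos (ε : ℝ) : 0 < lamfun ε := exp_pos _

theorem lamfun_mul_rpow_sq_le_ptil {c : ℝ} (hc : 0 ≤ c) (hcε : 2 * c ≤ 1 / ε ^ 2) (hr : 0 < r) :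
    lamfun ε * (r ^ c) ^ 2 ≤ ptil ε r := by
  refine mul_le_mul_of_nonneg_left ?_ (lamfun_pos ε).le
  have hsq : (r ^ c) ^ 2 = r ^ (2 * c) := by
    rw [← rpow_natCast, ← rpow_mul hr.le, mul_comm, Nat.cast_ofNat]
  have hpos (a : ℝ) : 0 < r ^ a := rpow_pos_of_pos hr a
  rw [hsq]
  rcases le_total 1 r with h1r | hr1
  · linarith [rpow_le_rpow_of_exponent_le h1r hcε, hpos (-(1 / ε ^ 2))]
  · linarith [rpow_le_one hr.le hr1 (by linarith : 0 ≤ 2 * c), hpos (1 / ε ^ 2),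
      one_le_rpow_of_pos_of_le_one_of_nonpos hr hr1 (by linarith : -(1 / ε ^ 2) ≤ 0)]

theorem pressure_sub_damping_le {a N : ℝ} (hε : 0 < ε) (hγ : 0 ≤ γ) (hεγ : 2 * γ ≤ 1 / ε ^ 2)
    (hr : 0 < r) (ha : 0 < a) (hN : 0 ≤ N) :
    4 * (160 * (r ^ γ) ^ 2 / (a * hfun ε γ r) * N) - 4 * ptil ε r * N ^ 2
      ≤ (160 / (a * ε)) ^ 2 / lamfun ε := by
  have hl := lamfun_pos ε
  have hh : ε * r ^ γ ≤ hfun ε γ r := by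
    have : 0 < ε * r ^ ((7 : ℝ) / 8) := by positivity
    rw [hfun]
    linarith
  have hpressure : 160 * (r ^ γ) ^ 2 / (a * hfun ε γ r) ≤ 160 / (a * ε) * r ^ γ := calc
    160 * (r ^ γ) ^ 2 / (a * hfun ε γ r) ≤ 160 * (r ^ γ) ^ 2 / (a * (ε * r ^ γ)) := by gcongr
    _ = 160 / (a * ε) * r ^ γ := by field_simp
  have hyoung : 4 * (160 / (a * ε)) * (r ^ γ * N) - 4 * lamfun ε * (r ^ γ * N) ^ 2
      ≤ (160 / (a * ε)) ^ 2 / lamfun ε := by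
    rw [le_div_iff₀ hl]
    nlinarith [sq_nonneg (160 / (a * ε) - 2 * lamfun ε * (r ^ γ * N))]
  linarith [mul_le_mul_of_nonneg_right hpressure hN,
    mul_le_mul_of_nonneg_right (lamfun_mul_rpow_sq_le_ptil hγ hεγ hr) (sq_nonneg N)]

variable {ν κ : ℝ}

theorem muof_pos (hν : 0 < ν) (hκ : κ ≠ 0) : 0 < muof ν κ :=
  sub_pos.2 ((sqrt_lt' hν).2 (sub_lt_self _ (by positivity)))

theorem muof_le (ν κ : ℝ) : muof ν κ ≤ ν := sub_le_self _ (sqrt_nonneg _)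

theorem muof_mul_two_mul_sub (hκν : κ ^ 2 ≤ ν ^ 2) :
    muof ν κ * (2 * ν - muof ν κ) = κ ^ 2 := by
  have hsqrt := sq_sqrt (sub_nonneg.2 hκν)
  rw [muof]
  linear_combination -hsqrt

end Coefficients

section TimeSlice

open smoothPeriodic
open scoped ContDiff Matrix

variable {d : ℕ} {ε γ ν κ : ℝ}

theorem partialDeriv_sqrt {r s h' ψ : smoothPeriodic d} (hr : ∀ x, 0 < r x)
    (hs : ∀ x, s x = √(r x)) {j : Fin d} (hψ : r * partialDeriv j ψ = h' * partialDeriv j r) :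
    2 * (h' * partialDeriv j s) = s * partialDeriv j ψ := by
  have hss : s * s = r := ext fun x => by
    change s x * s x = r x
    rw [hs, mul_self_sqrt (hr x).le]
  have hcancel : s * (2 * (h' * partialDeriv j s)) = s * (s * partialDeriv j ψ) := by
    rw [← mul_assoc s s, hss, hψ, ← hss, (partialDeriv j).leibniz, smul_eq_mul]
    ring
  refine ext fun x => mul_left_cancel₀ (a := s x) ?_ (congrArg (fun f => f x) hcancel)
  rw [hs]
  exact (sqrt_pos.2 (hr x)).ne'

theorem two_mul_Kvec {r h' ψ : smoothPeriodic d} (hr : ∀ x, 0 < r x)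
    (hh' : ∀ x, h' x = deriv (hfun ε γ) (r x))
    (hψ : ∀ i, r * partialDeriv i ψ = h' * partialDeriv i r) (x : Fin d → ℝ) (i : Fin d) :
    2 * Kvec ε γ r x i = (∑ j, partialDeriv j ψ * partialDeriv i (partialDeriv j ψ)
      + partialDeriv i (h' * ∑ j, partialDeriv j (partialDeriv j ψ))) x := by
  obtain ⟨s, hs⟩ := exists_eq_comp (G := (√·))
    (fun y hy => (contDiffAt_sqrt (ne_of_gt hy)).contDiffWithinAt) hr
  set E := ∑ j, partialDeriv j ψ ^ 2 + 2 * (h' * ∑ j, partialDeriv j (partialDeriv j ψ)) with hE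
  have hdvg (y) : dvg (fun z => deriv (hfun ε γ) (r z) • grad (fun w => √(r w)) z) y
      = (∑ j, partialDeriv j (h' * partialDeriv j s)) y := by
    simp only [← hs, ← hh', sum_partialDeriv_apply]
    rfl
  have hfield (y) : h' y * (∑ j, partialDeriv j (h' * partialDeriv j s)) y / √(r y)
      = ((1 / 4 : ℝ) • E) y := by
    have hdiv : 4 * (h' y * (∑ j, partialDeriv j (h' * partialDeriv j s)) y) = s y * E y :=
      congrArg (fun f => f y) <|
        four_mul_div_grad_sqrt fun j => partialDeriv_sqrt hr hs (hψ j)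
    rw [← hs, div_eq_iff (by rw [hs]; exact (sqrt_pos.2 (hr y)).ne')]
    change _ = 1 / 4 * E y * s y
    linear_combination hdiv / 4
  have hK : Kvec ε γ r x i = partialDeriv i ((1 / 4 : ℝ) • E) x := by
    rw [partialDeriv_apply, Kvec, grad]
    congr 1 with y
    rw [hdvg, ← hh', hfield]
  rw [hK, (partialDeriv i).map_smul, hE, derivation_capillary_potential]
  change (2 : ℝ) * (1 / 4 * (2 * _)) = _
  ring

theorem two_mul_dvgM_symD (h : smoothPeriodic d) (v : Fin d → smoothPeriodic d) (x : Fin d → ℝ)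
    (i : Fin d) :
    2 * dvgM (fun y i j => h y * symD (fun z k => v k z) y i j) x i
      = (∑ j, partialDeriv j (h * (partialDeriv j (v i) + partialDeriv i (v j)))) x := by
  have hterm (j : Fin d) : 2 * pd j (fun y => h y * symD (fun z k => v k z) y i j) x
      = partialDeriv j (h * (partialDeriv j (v i) + partialDeriv i (v j))) x := by
    have hhalf : (fun y => h y * symD (fun z k => v k z) y i j)
        = ((1 / 2 : ℝ) • (h * (partialDeriv j (v i) + partialDeriv i (v j))) :
          smoothPeriodic d) := by
      funext y
      change h y * ((pd j (v i) y + pd i (v j) y) / 2)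
        = 1 / 2 * (h y * (pd j (v i) y + pd i (v j) y))
      ring
    rw [hhalf, ← partialDeriv_apply, (partialDeriv j).map_smul]
    change (2 : ℝ) * (1 / 2 * _) = _
    ring
  rw [dvgM, Finset.mul_sum, sum_apply]
  exact Finset.sum_congr rfl fun j _ => hterm j

theorem grad_pressure {P : ℝ → ℝ} (hP : IsPeps ε γ ν κ P) {r h' ψ p q : smoothPeriodic d}
    (hr : ∀ x, 0 < r x) (hh' : ∀ x, h' x = deriv (hfun ε γ) (r x))
    (hψ : ∀ i, r * partialDeriv i ψ = h' * partialDeriv i r)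
    (hp : ∀ x, p x = ptil ε (r x)) (hq : ∀ x, q x = r x ^ γ) (x : Fin d → ℝ) (i : Fin d) :
    grad (fun y => r y ^ γ + P (r y)) x i
      = (partialDeriv i q + muof ν κ • (p * partialDeriv i ψ)) x := by
  have hPr : HasDerivAt P (muof ν κ * p x * h' x / r x) (r x) := by
    rw [hp, hh']
    exact hP (r x) (hr x)
  have hψx : r x * partialDeriv i ψ x = h' x * partialDeriv i r x := congrArg (fun f => f x) (hψ i)
  have hadd : pd i (fun y => q y + P (r y)) x = pd i q x + pd i (fun y => P (r y)) x :=
    congrArg (fun L : (Fin d → ℝ) →L[ℝ] ℝ => L (Pi.single i 1)) <|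
      fderiv_fun_add (differentiableAt q x)
        (hPr.differentiableAt.comp x (differentiableAt r x))
  have hψx' : partialDeriv i ψ x = h' x * partialDeriv i r x / r x := by
    rw [← hψx, mul_div_cancel_left₀ _ (hr x).ne']
  simp only [grad, ← hq]
  rw [hadd, pd_comp hPr (differentiableAt r x)]
  change _ = _ + muof ν κ * (p x * partialDeriv i ψ x)
  rw [hψx', ← partialDeriv_apply, ← partialDeriv_apply]
  ring

/-- A smooth solution of (QNS_ε) at a single time: `r` and `v` are the density and the velocity at
that time, `rt` and `vt` their time derivatives. -/
structure IsQNSSlice (ε γ ν κ : ℝ) (P : ℝ → ℝ) (r rt : smoothPeriodic d)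
    (v vt : Fin d → smoothPeriodic d) : Prop where
  pos : ∀ x, 0 < r x
  continuity : ∀ x, rt x + dvg (fun y => r y • fun i => v i y) x = 0
  momentum : ∀ x i, rt x * v i x + r x * vt i x
      + dvgM (fun y i j => r y * v i y * v j y) x i
      + grad (fun y => r y ^ γ + P (r y)) x i
      + ptil ε (r x) * v i x
    = 2 * ν * dvgM (fun y i j => hfun ε γ (r y) * symD (fun z k => v k z) y i j) x i
      + 2 * ν * grad (fun y => gfun ε γ (r y) * dvg (fun z k => v k z) y) x i
      + 2 * κ ^ 2 * r x * Kvec ε γ r x i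

namespace IsQNSSlice

variable {P Φ : ℝ → ℝ} {r rt h h' p q ψ ψt : smoothPeriodic d}
  {v vt w wt : Fin d → smoothPeriodic d}

theorem continuity_eq (hs : IsQNSSlice ε γ ν κ P r rt v vt) :
    rt = -∑ j, partialDeriv j (r * v j) := by
  refine ext fun x => eq_neg_of_add_eq_zero_left ?_
  rw [sum_partialDeriv_apply]
  exact hs.continuity x

theorem momentum_eq (hs : IsQNSSlice ε γ ν κ P r rt v vt) (hκν : κ ^ 2 ≤ ν ^ 2)
    (hP : IsPeps ε γ ν κ P) (hh : ∀ x, h x = hfun ε γ (r x))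
    (hh' : ∀ x, h' x = deriv (hfun ε γ) (r x)) (hp : ∀ x, p x = ptil ε (r x))
    (hq : ∀ x, q x = r x ^ γ) (hψ : ∀ i, r * partialDeriv i ψ = h' * partialDeriv i r)
    (i : Fin d) :
    rt * v i + r * vt i + ∑ j, partialDeriv j (r * v i * v j)
        + (partialDeriv i q + algebraMap ℝ _ (muof ν κ) * p * partialDeriv i ψ) + p * v i
      = algebraMap ℝ _ ν * ∑ j, partialDeriv j (h * (partialDeriv j (v i) + partialDeriv i (v j)))
        + 2 * algebraMap ℝ _ ν * partialDeriv i ((r * h' - h) * ∑ j, partialDeriv j (v j))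
        + algebraMap ℝ _ (muof ν κ) * (2 * algebraMap ℝ _ ν - algebraMap ℝ _ (muof ν κ)) *
          (r * (∑ j, partialDeriv j ψ * partialDeriv i (partialDeriv j ψ)
            + partialDeriv i (h' * ∑ j, partialDeriv j (partialDeriv j ψ)))) := by
  have hconv (x) : dvgM (fun y i j => r y * v i y * v j y) x i
      = (∑ j, partialDeriv j (r * v i * v j)) x :=
    (sum_partialDeriv_apply (fun j => r * v i * v j) x).symm
  have hbulk (x) : grad (fun y => gfun ε γ (r y) * dvg (fun z k => v k z) y) x i
      = partialDeriv i ((r * h' - h) * ∑ j, partialDeriv j (v j)) x := by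
    rw [partialDeriv_apply, grad]
    congr 1 with y
    rw [gfun, ← hh', ← hh]
    exact congrArg _ (sum_partialDeriv_apply v y).symm
  refine ext fun x => ?_
  have hmom := hs.momentum x i
  rw [hconv, hbulk, grad_pressure hP hs.pos hh' hψ hp hq, ← hp] at hmom
  simp only [← hh] at hmom
  have hcap := two_mul_Kvec hs.pos hh' hψ x i
  have hshear := two_mul_dvgM_symD h v x i
  change _ * _ + _ * _ + _ + (_ + muof ν κ * _ * _) + _ * _
    = ν * _ + (2 : ℝ) * ν * _ + muof ν κ * ((2 : ℝ) * ν - muof ν κ) * (_ * _)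
  change _ + (_ + muof ν κ * (_ * _)) + _ = _ at hmom
  rw [muof_mul_two_mul_sub hκν]
  linear_combination hmom + ν * hshear + κ ^ 2 * r x * hcap

theorem mul_partialDeriv_potential (hr : ∀ x, 0 < r x) (hΦ : IsPhieps ε γ Φ)
    (hh' : ∀ x, h' x = deriv (hfun ε γ) (r x)) (hψ : ∀ x, ψ x = Φ (r x)) (i : Fin d) :
    r * partialDeriv i ψ = h' * partialDeriv i r := by
  refine ext fun x => ?_
  change r x * partialDeriv i ψ x = h' x * partialDeriv i r x
  rw [partialDeriv_eq_of_comp hψ (hasDerivAt_of_contDiffOn_Ioi hΦ.1 (hr x)), ← mul_assoc,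
    hΦ.2 _ (hr x), hh']

theorem potential_eq (hs : IsQNSSlice ε γ ν κ P r rt v vt) (hΦ : IsPhieps ε γ Φ)
    (hh' : ∀ x, h' x = deriv (hfun ε γ) (r x))
    (hψ : ∀ i, r * partialDeriv i ψ = h' * partialDeriv i r)
    (hψt : ∀ x, ψt x = deriv Φ (r x) * rt x) :
    ψt = -∑ j, v j * partialDeriv j ψ - h' * ∑ j, partialDeriv j (v j) := by
  refine ext fun x => mul_left_cancel₀ (hs.pos x).ne' ?_
  have htransport := congrArg (fun f => f x) (mul_transport_potential_eq hs.continuity_eq hψ)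
  rw [hψt, ← mul_assoc, hΦ.2 _ (hs.pos x), ← hh']
  exact htransport.symm

theorem effectiveVelocity_eq (hs : IsQNSSlice ε γ ν κ P r rt v vt) (hκν : κ ^ 2 ≤ ν ^ 2)
    (hP : IsPeps ε γ ν κ P) (hΦ : IsPhieps ε γ Φ) (hh : ∀ x, h x = hfun ε γ (r x))
    (hh' : ∀ x, h' x = deriv (hfun ε γ) (r x)) (hp : ∀ x, p x = ptil ε (r x))
    (hq : ∀ x, q x = r x ^ γ) (hψ : ∀ x, ψ x = Φ (r x)) (hψt : ∀ x, ψt x = deriv Φ (r x) * rt x)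
    (hw : ∀ i, w i = v i + algebraMap ℝ _ (muof ν κ) * partialDeriv i ψ)
    (hwt : ∀ i, wt i = vt i + algebraMap ℝ _ (muof ν κ) * partialDeriv i ψt) (i : Fin d) :
    r * (wt i + ∑ j, v j * partialDeriv j (w i)) = -p * w i
      + ∑ j, partialDeriv j (viscousStress (algebraMap ℝ _ ν) (algebraMap ℝ _ (muof ν κ)) h
          (r * h' - h) q (jacobian partialDeriv w) i j) := by
  have hDh (i : Fin d) : partialDeriv i h = h' * partialDeriv i r := ext fun x => by
    rw [partialDeriv_eq_of_comp hh
      (hasDerivAt_of_contDiffOn_Ioi (contDiffOn_hfun ε γ) (hs.pos x)), ← hh']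
    rfl
  have hDψ := mul_partialDeriv_potential hs.pos hΦ hh' hψ
  rw [hwt, hw, funext hw]
  have hconst (c : ℝ) (i : Fin d) : partialDeriv i (algebraMap ℝ (smoothPeriodic d) c) = 0 :=
    (partialDeriv i).map_algebraMap c
  exact effectiveVelocity_momentum_eq (A := smoothPeriodic d) (D := partialDeriv)
    (ν := algebraMap ℝ _ ν) (μ := algebraMap ℝ _ (muof ν κ)) (hconst ν) (hconst _)
    partialDeriv_comm hDh hDψ hs.continuity_eq (hs.potential_eq hΦ hh' hDψ hψt) i
    (hs.momentum_eq hκν hP hh hh' hp hq hDψ i)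

theorem stressPower_apply_ge (hd : d ≤ 7) (hγ : 7 / 8 ≤ γ) (hγ' : γ ≤ 4) (hν : 0 < ν)
    (hκν : κ ^ 2 ≤ ν ^ 2) (hνκ : ν ^ 2 ≤ 4 * κ ^ 2) (hε : 0 < ε) (hr : ∀ x, 0 < r x)
    (hh : ∀ x, h x = hfun ε γ (r x)) (hh' : ∀ x, h' x = deriv (hfun ε γ) (r x))
    (hq : ∀ x, q x = r x ^ γ) (x : Fin d → ℝ) :
    -(160 * (r x ^ γ) ^ 2 / ((2 * ν - muof ν κ) * hfun ε γ (r x))) * (w ⬝ᵥ w) x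
      ≤ ((gradNormSqSmul w (jacobian partialDeriv w))ᵀ * viscousStress (algebraMap ℝ _ ν)
          (algebraMap ℝ _ (muof ν κ)) h (r * h' - h) q (jacobian partialDeriv w)).trace x := by
  have hκ : κ ≠ 0 := by
    rintro rfl
    nlinarith
  have hg : eval x (r * h' - h) = gfun ε γ (r x) := by
    rw [gfun, ← hh, ← hh']
    rfl
  have hge := stressPower_ge (by simpa using hd) (muof_pos hν hκ)
    (by linarith [muof_le ν κ] : muof ν κ < 2 * ν) (by rwa [muof_mul_two_mul_sub hκν])
    (hfun_pos hε (hr x)) (neg_hfun_div_eight_le_gfun hε.le hγ (hr x))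
    (gfun_le_three_mul_hfun hε.le hγ' (hr x)) (r x ^ γ) (eval x ∘ w)
    ((jacobian partialDeriv w).map (eval x))
  have hN : (w ⬝ᵥ w) x = (eval x ∘ w) ⬝ᵥ (eval x ∘ w) := dotProduct_apply w w x
  have hmap := map_stressPower (eval x : smoothPeriodic d →+* ℝ) (algebraMap ℝ _ ν)
    (algebraMap ℝ _ (muof ν κ)) h (r * h' - h) q w (jacobian partialDeriv w)
  rw [hN]
  refine hge.trans_eq ?_
  change _ = (eval x : smoothPeriodic d →+* ℝ) _
  rw [hmap]
  change _ = Matrix.trace ((gradNormSqSmul _ _)ᵀ * viscousStress ν (muof ν κ) (h x)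
    (eval x (r * h' - h)) (q x) _)
  rw [hg, hh, hq]
  rfl

theorem exists_energy_le (hs : IsQNSSlice ε γ ν κ P r rt v vt) (hd : d ≤ 7) (hγ : 7 / 8 ≤ γ)
    (hγ' : γ ≤ 4) (hν : 0 < ν) (hκν : κ ^ 2 ≤ ν ^ 2) (hνκ : ν ^ 2 ≤ 4 * κ ^ 2) (hε : 0 < ε)
    (hεγ : 2 * γ ≤ 1 / ε ^ 2) (hP : IsPeps ε γ ν κ P) (hΦ : IsPhieps ε γ Φ)
    (hψ : ∀ x, ψ x = Φ (r x)) (hψt : ∀ x, ψt x = deriv Φ (r x) * rt x)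
    (hw : ∀ i, w i = v i + algebraMap ℝ _ (muof ν κ) * partialDeriv i ψ)
    (hwt : ∀ i, wt i = vt i + algebraMap ℝ _ (muof ν κ) * partialDeriv i ψt) :
    ∃ V : Fin d → smoothPeriodic d, ∀ x,
      (rt * (w ⬝ᵥ w) ^ 2 + r * (4 * (w ⬝ᵥ w) * (w ⬝ᵥ wt)) : smoothPeriodic d) x
        ≤ (∑ j, partialDeriv j (V j)) x
          + (160 / ((2 * ν - muof ν κ) * ε)) ^ 2 / lamfun ε := by
  obtain ⟨h, hh⟩ := exists_eq_comp (contDiffOn_hfun ε γ) hs.pos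
  obtain ⟨h', hh'⟩ := exists_eq_comp (contDiffOn_deriv_hfun ε γ) hs.pos
  obtain ⟨p, hp⟩ := exists_eq_comp (contDiffOn_ptil ε) hs.pos
  obtain ⟨q, hq⟩ := exists_eq_comp (contDiffOn_rpow γ) hs.pos
  have hbalance := energy_balance hs.continuity_eq
    (hs.effectiveVelocity_eq hκν hP hΦ hh hh' hp hq hψ hψt hw hwt)
  set S := viscousStress (algebraMap ℝ _ ν) (algebraMap ℝ _ (muof ν κ)) h (r * h' - h) q
    (jacobian partialDeriv w)
  refine ⟨fun j => 4 * ((w ⬝ᵥ w) * ∑ i, w i * S i j) - r * (w ⬝ᵥ w) ^ 2 * v j,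
    fun x => (congrArg (fun f => f x) hbalance).trans_le ?_⟩
  have hstress := stressPower_apply_ge (w := w) hd hγ hγ' hν hκν hνκ hε hs.pos hh hh' hq x
  have hN : 0 ≤ (w ⬝ᵥ w) x := by
    rw [dotProduct_apply]
    exact Finset.sum_nonneg fun i _ => mul_self_nonneg (w i x)
  have hpress := pressure_sub_damping_le hε (by linarith) hεγ (hs.pos x)
    (by linarith [muof_le ν κ] : 0 < 2 * ν - muof ν κ) hN
  rw [← hp] at hpress
  change _ - (4 : ℝ) * p x * (w ⬝ᵥ w) x ^ 2 - (4 : ℝ) * _ ≤ _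
  linarith

theorem setIntegral_energy_le (hs : IsQNSSlice ε γ ν κ P r rt v vt) (hd : d ≤ 7) (hγ : 7 / 8 ≤ γ)
    (hγ' : γ ≤ 4) (hν : 0 < ν) (hκν : κ ^ 2 ≤ ν ^ 2) (hνκ : ν ^ 2 ≤ 4 * κ ^ 2) (hε : 0 < ε)
    (hεγ : 2 * γ ≤ 1 / ε ^ 2) (hP : IsPeps ε γ ν κ P) (hΦ : IsPhieps ε γ Φ)
    (hψ : ∀ x, ψ x = Φ (r x)) (hψt : ∀ x, ψt x = deriv Φ (r x) * rt x)
    (hw : ∀ i, w i = v i + algebraMap ℝ _ (muof ν κ) * partialDeriv i ψ)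
    (hwt : ∀ i, wt i = vt i + algebraMap ℝ _ (muof ν κ) * partialDeriv i ψt) :
    ∫ x in unitBox d, (rt * (w ⬝ᵥ w) ^ 2 + r * (4 * (w ⬝ᵥ w) * (w ⬝ᵥ wt)) : smoothPeriodic d) x
      ≤ (160 / ((2 * ν - muof ν κ) * ε)) ^ 2 / lamfun ε := by
  obtain ⟨V, hV⟩ :=
    hs.exists_energy_le hd hγ hγ' hν hκν hνκ hε hεγ hP hΦ hψ hψt hw hwt
  have hint (f : smoothPeriodic d) : IntegrableOn f (unitBox d) :=
    f.2.1.continuous.continuousOn.integrableOn_compact isCompact_Icc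
  have hconst (C : ℝ) : IntegrableOn (fun _ => C) (unitBox d) :=
    integrableOn_const isCompact_Icc.measure_lt_top.ne
  refine (setIntegral_mono (hint _) ((hint _).add (hconst _)) hV).trans_eq ?_
  rw [integral_add' (hint _) (hconst _), integral_sum_partialDeriv]
  simp [unitBox, Measure.real, Real.volume_Icc_pi]

end IsQNSSlice

end TimeSlice

section Solution

open smoothPeriodic
open scoped ContDiff Matrix

variable {d : ℕ} {ε γ ν κ T t : ℝ} {P Φ : ℝ → ℝ} {ρ : ℝ → (Fin d → ℝ) → ℝ}
  {u w : ℝ → (Fin d → ℝ) → Fin d → ℝ}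

theorem hasDerivAt_mul_normSq_sq {ι : Type*} [Fintype ι] {r : ℝ → ℝ} {r' : ℝ} {y : ℝ → ι → ℝ}
    {y' : ι → ℝ} (hr : HasDerivAt r r' t) (hy : ∀ i, HasDerivAt (fun s => y s i) (y' i) t) :
    HasDerivAt (fun s => r s * (∑ i, y s i ^ 2) ^ 2)
      (r' * (y t ⬝ᵥ y t) ^ 2 + r t * (4 * (y t ⬝ᵥ y t) * (y t ⬝ᵥ y'))) t := by
  have hsum (s : ℝ) : ∑ i, y s i ^ 2 = y s ⬝ᵥ y s := by simp only [dotProduct, sq]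
  have hnormSq : HasDerivAt (fun s => ∑ i, y s i ^ 2) (2 * (y t ⬝ᵥ y')) t := by
    refine (HasDerivAt.fun_sum fun i _ => (hy i).pow 2).congr_deriv ?_
    simp only [dotProduct, Finset.mul_sum, Nat.cast_ofNat, Nat.add_one_sub_one, pow_one, mul_assoc]
  refine (hr.mul (hnormSq.pow 2)).congr_deriv ?_
  simp only [hsum, Pi.pow_apply]
  push_cast
  ring

namespace IsQNSSol

theorem contDiffOn_velocity (hs : IsQNSSol d ε γ ν κ T P ρ u) (i : Fin d) :
    ContDiffOn ℝ ∞ (fun p : ℝ × (Fin d → ℝ) => u p.1 p.2 i) (Set.Icc 0 T ×ˢ Set.univ) :=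
  contDiffOn_pi.1 hs.2.1 i

theorem contDiffOn_potential (hs : IsQNSSol d ε γ ν κ T P ρ u) (hΦ : IsPhieps ε γ Φ) :
    ContDiffOn ℝ ∞ (fun p : ℝ × (Fin d → ℝ) => Φ (ρ p.1 p.2)) (Set.Icc 0 T ×ˢ Set.univ) :=
  hΦ.1.comp hs.1 fun _ _ => hs.2.2.1 _ _

theorem contDiffOn_effectiveVelocity (hs : IsQNSSol d ε γ ν κ T P ρ u) (hΦ : IsPhieps ε γ Φ)
    (hw : ∀ s y i, w s y i = u s y i + muof ν κ * grad (fun z => Φ (ρ s z)) y i) (hT : 0 < T)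
    (i : Fin d) :
    ContDiffOn ℝ ∞ (fun p : ℝ × (Fin d → ℝ) => w p.1 p.2 i) (Set.Icc 0 T ×ˢ Set.univ) := by
  simp only [hw]
  exact (hs.contDiffOn_velocity i).add <| contDiffOn_const.mul <|
    contDiffOn_pd_slice (f := fun s z => Φ (ρ s z)) (uniqueDiffOn_Icc hT)
      (hs.contDiffOn_potential hΦ) i

theorem contDiffOn_energyDensity (hs : IsQNSSol d ε γ ν κ T P ρ u) (hΦ : IsPhieps ε γ Φ)
    (hw : ∀ s y i, w s y i = u s y i + muof ν κ * grad (fun z => Φ (ρ s z)) y i) (hT : 0 < T) :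
    ContDiffOn ℝ ∞ (fun p : ℝ × (Fin d → ℝ) => ρ p.1 p.2 * (∑ i, w p.1 p.2 i ^ 2) ^ 2)
      (Set.Icc 0 T ×ˢ Set.univ) :=
  hs.1.mul <| (ContDiffOn.sum fun i _ =>
    (hs.contDiffOn_effectiveVelocity hΦ hw hT i).pow 2).pow 2

theorem effectiveVelocity_zero (hs : IsQNSSol d ε γ ν κ T P ρ u) (hΦ : IsPhieps ε γ Φ)
    (hw : ∀ s y i, w s y i = u s y i + muof ν κ * grad (fun z => Φ (ρ s z)) y i) (hT : 0 ≤ T)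
    (x : Fin d → ℝ) (i : Fin d) :
    w 0 x i = u 0 x i + muof ν κ * (deriv (hfun ε γ) (ρ 0 x) / ρ 0 x * pd i (ρ 0) x) := by
  have hpos := hs.2.2.1 0 x
  have hρ : DifferentiableAt ℝ (ρ 0) x :=
    (contDiff_slice hs.1 (Set.left_mem_Icc.2 hT)).differentiable (by simp) x
  rw [hw, grad, pd_comp (hasDerivAt_of_contDiffOn_Ioi hΦ.1 hpos) hρ, ← hΦ.2 _ hpos,
    mul_div_cancel_left₀ _ hpos.ne']

theorem isQNSSlice (hs : IsQNSSol d ε γ ν κ T P ρ u) (ht : t ∈ Set.Ioo 0 T)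
    {r rt : smoothPeriodic d} {v vt : Fin d → smoothPeriodic d} (hr : ∀ x, r x = ρ t x)
    (hrt : ∀ x, HasDerivAt (fun s => ρ s x) (rt x) t) (hv : ∀ i x, v i x = u t x i)
    (hvt : ∀ i x, HasDerivAt (fun s => u s x i) (vt i x) t) :
    IsQNSSlice ε γ ν κ P r rt v vt := by
  obtain ⟨-, -, hpos, -, -, hcont, hmom⟩ := hs
  have hrρ : ρ t = r := funext fun x => (hr x).symm
  have hvu : u t = fun x i => v i x := funext fun x => funext fun i => (hv i x).symm
  refine ⟨fun x => by rw [hr]; exact hpos t x, fun x => ?_, fun x i => ?_⟩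
  · simpa only [(hrt x).deriv, hrρ, hvu] using hcont t ht x
  · simpa only [((hrt x).fun_mul (hvt i x)).deriv, hrρ, hvu] using hmom t ht x i

theorem exists_isQNSSlice (hs : IsQNSSol d ε γ ν κ T P ρ u) (ht : t ∈ Set.Ioo 0 T) :
    ∃ (r rt : smoothPeriodic d) (v vt : Fin d → smoothPeriodic d), (∀ x, r x = ρ t x) ∧
      (∀ x, HasDerivAt (fun s => ρ s x) (rt x) t) ∧ (∀ i x, v i x = u t x i) ∧
      (∀ i x, HasDerivAt (fun s => u s x i) (vt i x) t) ∧ IsQNSSlice ε γ ν κ P r rt v vt := by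
  have hsub := Set.prod_mono_left (t := (Set.univ : Set (Fin d → ℝ)))
    (Set.Ioo_subset_Icc_self (a := 0) (b := T))
  have hu (s : ℝ) (i : Fin d) : SpacePeriodic fun x => u s x i :=
    fun x n => congrFun (hs.2.2.2.2.1 s x n) i
  obtain ⟨r, hr⟩ := exists_eq_slice (hs.1.mono hsub) hs.2.2.2.1 ht
  obtain ⟨rt, hrt⟩ := exists_hasDerivAt_slice isOpen_Ioo (hs.1.mono hsub) hs.2.2.2.1 ht
  choose v hv using fun i =>
    exists_eq_slice ((hs.contDiffOn_velocity i).mono hsub) (hu · i) ht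
  choose vt hvt using fun i =>
    exists_hasDerivAt_slice isOpen_Ioo ((hs.contDiffOn_velocity i).mono hsub) (hu · i) ht
  exact ⟨r, rt, v, vt, hr, hrt, hv, hvt, hs.isQNSSlice ht hr hrt hv hvt⟩

theorem setIntegral_deriv_energyDensity_le (hs : IsQNSSol d ε γ ν κ T P ρ u) (hd : d ≤ 7)
    (hγ : 7 / 8 ≤ γ) (hγ' : γ ≤ 4) (hν : 0 < ν) (hκν : κ ^ 2 ≤ ν ^ 2) (hνκ : ν ^ 2 ≤ 4 * κ ^ 2)
    (hε : 0 < ε) (hεγ : 2 * γ ≤ 1 / ε ^ 2) (hP : IsPeps ε γ ν κ P) (hΦ : IsPhieps ε γ Φ)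
    (hw : ∀ s y i, w s y i = u s y i + muof ν κ * grad (fun z => Φ (ρ s z)) y i)
    (ht : t ∈ Set.Ioo 0 T) :
    ∫ x in unitBox d, deriv (fun s => ρ s x * (∑ i, w s x i ^ 2) ^ 2) t
      ≤ (160 / ((2 * ν - muof ν κ) * ε)) ^ 2 / lamfun ε := by
  obtain ⟨r, rt, v, vt, hr, hrt, hv, hvt, hslice⟩ := hs.exists_isQNSSlice ht
  obtain ⟨ψ, hψ⟩ := exists_eq_comp hΦ.1 hslice.pos
  have hΦρ (x) : HasDerivAt (fun s => Φ (ρ s x)) (deriv Φ (r x) * rt x) t := by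
    have hΦr := hasDerivAt_of_contDiffOn_Ioi hΦ.1 (hslice.pos x)
    rw [hr] at hΦr ⊢
    exact hΦr.comp t (hrt x)
  obtain ⟨Φ', hΦ'⟩ := exists_eq_comp (hΦ.1.deriv_of_isOpen isOpen_Ioi le_rfl) hslice.pos
  have hψt (x) : (Φ' * rt) x = deriv Φ (r x) * rt x := congrArg (· * rt x) (hΦ' x)
  set wt : Fin d → smoothPeriodic d :=
    fun i => vt i + algebraMap ℝ _ (muof ν κ) * partialDeriv i (Φ' * rt)
  have hwt (i x) : HasDerivAt (fun s => w s x i) (wt i x) t := by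
    simp only [hw]
    refine (hvt i x).add (HasDerivAt.const_mul _ ?_)
    rw [partialDeriv_apply, funext hψt, ← funext fun x => (hΦρ x).deriv]
    exact hasDerivAt_pd_slice (f := fun s z => Φ (ρ s z)) isOpen_Ioo
      ((hs.contDiffOn_potential hΦ).mono (Set.prod_mono_left Set.Ioo_subset_Icc_self)) ht x i
  have hwx (i x) : (v i + algebraMap ℝ _ (muof ν κ) * partialDeriv i ψ) x = w t x i := by
    rw [hw, ← hv, grad, ← funext hr, ← funext hψ]
    rfl
  refine (integral_congr_ae (.of_forall fun x => ?_)).trans_le <|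
    hslice.setIntegral_energy_le hd hγ hγ' hν hκν hνκ hε hεγ hP hΦ hψ hψt (fun _ => rfl)
      (wt := wt) fun _ => rfl
  refine (hasDerivAt_mul_normSq_sq (hrt x) (hwt · x)).deriv.trans ?_
  change _ = rt x * _ ^ 2 + r x * (4 * _ * _)
  simp only [dotProduct_apply, hwx, hr]

theorem setIntegral_energyDensity_le (hs : IsQNSSol d ε γ ν κ T P ρ u) (hd : d ≤ 7)
    (hγ : 7 / 8 ≤ γ) (hγ' : γ ≤ 4) (hν : 0 < ν) (hκν : κ ^ 2 ≤ ν ^ 2) (hνκ : ν ^ 2 ≤ 4 * κ ^ 2)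
    (hε : 0 < ε) (hεγ : 2 * γ ≤ 1 / ε ^ 2) (hP : IsPeps ε γ ν κ P) (hΦ : IsPhieps ε γ Φ)
    (hw : ∀ s y i, w s y i = u s y i + muof ν κ * grad (fun z => Φ (ρ s z)) y i)
    (ht : t ∈ Set.Ioo 0 T) :
    ∫ x in unitBox d, ρ t x * (∑ i, w t x i ^ 2) ^ 2
      ≤ (∫ x in unitBox d, ρ 0 x * (∑ i, w 0 x i ^ 2) ^ 2)
        + (160 / ((2 * ν - muof ν κ) * ε)) ^ 2 / lamfun ε * t := by
  simpa only [sub_zero] using setIntegral_le_add_mul_of_contDiffOn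
    (K := unitBox d) (f := fun s x => ρ s x * (∑ i, w s x i ^ 2) ^ 2)
    isCompact_Icc measurableSet_Icc
    (hs.contDiffOn_energyDensity hΦ hw (ht.1.trans ht.2))
    (fun _ => hs.setIntegral_deriv_energyDensity_le hd hγ hγ' hν hκν hνκ hε hεγ hP hΦ hw)
    (Set.Ioo_subset_Icc_self ht)

end IsQNSSol

end Solution

theorem statement17_general {d : ℕ} (hd : d ≤ 7) {γ ν κ ε : ℝ} (hγ : 7 / 8 ≤ γ) (hγ' : γ ≤ 4)
    (hν : 0 < ν) (hκν : κ ^ 2 ≤ ν ^ 2) (hνκ : ν ^ 2 ≤ 4 * κ ^ 2) (hε : 0 < ε)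
    (hεγ : 2 * γ ≤ 1 / ε ^ 2) (T : ℝ) (ρ0 : (Fin d → ℝ) → ℝ) (u0 : (Fin d → ℝ) → (Fin d → ℝ)) :
    ∃ C : ℝ, ∀ P Φ : ℝ → ℝ, IsPeps ε γ ν κ P → IsPhieps ε γ Φ →
      ∀ (ρ : ℝ → (Fin d → ℝ) → ℝ) (u : ℝ → (Fin d → ℝ) → (Fin d → ℝ)),
        IsQNSSol d ε γ ν κ T P ρ u → (∀ x, ρ 0 x = ρ0 x) → (∀ x, u 0 x = u0 x) →
      ∀ w : ℝ → (Fin d → ℝ) → (Fin d → ℝ),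
        (∀ s y i, w s y i = u s y i + muof ν κ * grad (fun z => Φ (ρ s z)) y i) →
      ∀ t ∈ Set.Ioo 0 T, ∫ x in unitBox d, ρ t x * (∑ i, w t x i ^ 2) ^ 2 ≤ C := by
  refine ⟨(∫ x in unitBox d, ρ0 x *
      (∑ i, (u0 x i + muof ν κ * (deriv (hfun ε γ) (ρ0 x) / ρ0 x * pd i ρ0 x)) ^ 2) ^ 2)
    + (160 / ((2 * ν - muof ν κ) * ε)) ^ 2 / lamfun ε * T,
    fun P Φ hP hΦ ρ u hs hρ0 hu0 w hw t ht => ?_⟩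
  have henergy := hs.setIntegral_energyDensity_le hd hγ hγ' hν hκν hνκ hε hεγ hP hΦ hw ht
  simp only [hs.effectiveVelocity_zero hΦ hw (ht.1.trans ht.2).le, hρ0, hu0, funext hρ0] at henergy
  have hl := lamfun_pos ε
  exact henergy.trans (by gcongr; exact ht.2.le)

theorem statement17 (γ : ℝ) (hγ1 : 1 < γ) (hγ3 : γ < 3) :
    ∃ δ : ℝ, 0 < δ ∧
      ∀ ν κ : ℝ, 0 < κ → 0 < ν → κ ^ 2 < ν ^ 2 → ν ^ 2 < 9 / 8 * κ ^ 2 →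
      ∃ εf : ℝ, 0 < εf ∧
        ∀ ε : ℝ, 0 < ε → ε < εf →
        ∀ T : ℝ, 0 < T →
        ∀ (ρ0 : (Fin 3 → ℝ) → ℝ) (u0 : (Fin 3 → ℝ) → (Fin 3 → ℝ)),
          ContDiff ℝ (⊤ : ℕ∞) ρ0 → ContDiff ℝ (⊤ : ℕ∞) u0 →
          SpacePeriodic ρ0 → SpacePeriodic u0 → (∀ x, 0 < ρ0 x) →
        ∃ C : ℝ,
          ∀ P Φ : ℝ → ℝ, IsPeps ε γ ν κ P → IsPhieps ε γ Φ →
          ∀ (ρ : ℝ → (Fin 3 → ℝ) → ℝ) (u : ℝ → (Fin 3 → ℝ) → (Fin 3 → ℝ)),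
            IsQNSSol 3 ε γ ν κ T P ρ u → (∀ x, ρ 0 x = ρ0 x) → (∀ x, u 0 x = u0 x) →
          ∀ w : ℝ → (Fin 3 → ℝ) → (Fin 3 → ℝ),
            (∀ s y i, w s y i = u s y i + muof ν κ * grad (fun z => Φ (ρ s z)) y i) →
          ∀ t ∈ Set.Ioo 0 T,
            (∫ x in unitBox 3, ρ t x * (∑ i, w t x i ^ 2) ^ ((3 + 2 * δ) / 2)) ≤ C := by
  refine ⟨1 / 2, by norm_num, fun ν κ _ hν hκν hνκ => ⟨1 / 3, by norm_num, ?_⟩⟩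
  intro ε hε hε3 T _ ρ0 u0 _ _ _ _ _
  have hεγ : 2 * γ ≤ 1 / ε ^ 2 := by
    rw [le_div_iff₀ (by positivity)]
    nlinarith
  have hexponent : ((3 : ℝ) + 2 * (1 / 2)) / 2 = (2 : ℕ) := by norm_num
  simpa only [hexponent, rpow_natCast] using
    statement17_general (d := 3) (by norm_num) (by linarith) (by linarith) hν hκν.le
      (by nlinarith) hε hεγ T ρ0 u0

end
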